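/- arXiv:0801.4259 — 3 statements merged into one kernel-verified Lean document; each statement's English description precedes it below -/
import Mathlib

section
/- Let H be a complex Hilbert space, M a von Neumann algebra acting on H, ξ₀ a cyclic and separating vector for M, and N another von Neumann algebra acting on H with the closure of {b ξ₀ : b ∈ N, b ≥ 0} contained in P♯. Let α : N → B(H) be a linear map such that α(x) ∈ M and α(x) ξ₀ = x ξ₀ for every x ∈ N. Then α is a Jordan homomorphism: α(xy + yx) = α(x)α(y) + α(y)α(x) for all x, y ∈ N. -/
open scoped InnerProductSpace
open Filter

variable {H : Type*} [NormedAddCommGroup H] [InnerProductSpace ℂ H] [CompleteSpace H]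

/-- The positive cone `P♯`: the closure in `H` of `{a ξ₀ : a ∈ M, a positive}`. -/
def sharpCone (M : VonNeumannAlgebra H) (ξ₀ : H) : Set H :=
  closure {ζ : H | ∃ a : H →L[ℂ] H, a ∈ M ∧ a.IsPositive ∧ a ξ₀ = ζ}

/-- `ξ₀` is a cyclic vector for `M`: the linear span of `{x ξ₀ : x ∈ M}` is dense in `H`. -/
def IsCyclicVector (M : VonNeumannAlgebra H) (ξ₀ : H) : Prop :=
  Dense ((Submodule.span ℂ ((fun x : H →L[ℂ] H => x ξ₀) '' (M : Set (H →L[ℂ] H)))) : Set H)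

/-- `ξ₀` is a separating vector for `M`: `x ∈ M` and `x ξ₀ = 0` imply `x = 0`. -/
def IsSeparatingVector (M : VonNeumannAlgebra H) (ξ₀ : H) : Prop :=
  ∀ x : H →L[ℂ] H, x ∈ M → x ξ₀ = 0 → x = 0

/-!
An element of `M` that sends `ξ₀` into `P♯` is positive, because `ξ₀` is cyclic for the commutant
of `M`. Hence `α` is a positive unital map, and Kadison's inequality `α(x)² ≤ α(x²)` holds for
self-adjoint `x`. Both sides have the same expectation in the state `ξ₀`, as
`⟪x² ξ₀, ξ₀⟫ = ‖x ξ₀‖² = ‖α(x) ξ₀‖² = ⟪α(x)² ξ₀, ξ₀⟫`, and `ξ₀` is separating, so they are equal;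
the Jordan identity follows by polarization.

Kadison's inequality is a Jensen inequality: for `0 ≤ x ≤ 1` the Bernstein polynomials `b k` of
degree `n` at `x` are a partition of unity whose moments at the points `k / n` are `x` and
`x² + (x - x²) / n`. Applying `α` to them and letting `n → ∞` gives the inequality.
-/

section Jordan

theorem map_mul_add_mul_comm_of_map_sq {A B : Type*} [Ring A] [StarRing A] [Algebra ℂ A]
    [StarModule ℂ A] [Ring B] [Algebra ℂ B] (φ : A →ₗ[ℂ] B)
    (hsq : ∀ a, IsSelfAdjoint a → φ (a ^ 2) = φ a ^ 2) (x y : A) :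
    φ (x * y + y * x) = φ x * φ y + φ y * φ x := by
  have jordan_selfAdjoint (a b : selfAdjoint A) :
      φ (a * b) + φ (b * a) = φ a * φ b + φ b * φ a := by
    have h := hsq (a + b) (a.2.add b.2)
    have ha := hsq a a.2
    have hb := hsq b b.2
    simp only [pow_two, add_mul, mul_add, map_add] at h ha hb
    linear_combination (norm := module) h - ha - hb
  rw [← realPart_add_I_smul_imaginaryPart x, ← realPart_add_I_smul_imaginaryPart y]
  simp only [add_mul, mul_add, smul_mul_assoc, mul_smul_comm, map_add, map_smul]
  linear_combination (norm := module)
    jordan_selfAdjoint (realPart x) (realPart y)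
      + Complex.I • jordan_selfAdjoint (realPart x) (imaginaryPart y)
      + Complex.I • jordan_selfAdjoint (imaginaryPart x) (realPart y)
      + (Complex.I * Complex.I) • jordan_selfAdjoint (imaginaryPart x) (imaginaryPart y)

end Jordan

section Kadison

/-- Expand `0 ≤ ∑ i ∈ s, (t i - m) * b i * (t i - m)` at the mean `m = ∑ i ∈ s, t i • b i`. -/
theorem sq_sum_smul_le_sum_sq_smul {ι B : Type*} [Ring B] [StarRing B] [PartialOrder B]
    [StarOrderedRing B] [Algebra ℝ B] [StarModule ℝ B] {s : Finset ι} {b : ι → B}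
    (hb : ∀ i ∈ s, 0 ≤ b i) (hsum : ∑ i ∈ s, b i = 1) (t : ι → ℝ) :
    (∑ i ∈ s, t i • b i) ^ 2 ≤ ∑ i ∈ s, t i ^ 2 • b i := by
  set m := ∑ i ∈ s, t i • b i with hm
  have hm_sa : IsSelfAdjoint m :=
    isSelfAdjoint_sum s fun i hi => (IsSelfAdjoint.all (t i)).smul (.of_nonneg (hb i hi))
  have variance_nonneg : 0 ≤ ∑ i ∈ s, (t i • 1 - m) * b i * (t i • 1 - m) :=
    Finset.sum_nonneg fun i hi =>
      (((IsSelfAdjoint.all (t i)).smul (.one B)).sub hm_sa).conjugate_nonneg (hb i hi)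
  have expand (i : ι) : (t i • 1 - m) * b i * (t i • 1 - m) =
      t i ^ 2 • b i - (t i • b i) * m - m * (t i • b i) + m * b i * m := by
    simp only [sub_mul, mul_sub, smul_mul_assoc, mul_smul_comm, one_mul, mul_one, smul_sub]
    module
  have variance_eq : ∑ i ∈ s, (t i • 1 - m) * b i * (t i • 1 - m) =
      ∑ i ∈ s, t i ^ 2 • b i - m ^ 2 := by
    simp only [expand, Finset.sum_add_distrib, Finset.sum_sub_distrib, ← Finset.sum_mul,
      ← Finset.mul_sum, ← hm, hsum, mul_one]
    noncomm_ring
  exact sub_nonneg.1 (variance_eq ▸ variance_nonneg)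

theorem sum_div_smul_bernsteinPolynomial {K : Type*} [Field K] {n : ℕ} (hn : (n : K) ≠ 0) :
    ∑ k ∈ Finset.range (n + 1), (k / n : K) • bernsteinPolynomial K n k = Polynomial.X := by
  simp only [div_eq_inv_mul, mul_smul, ← Finset.smul_sum, Nat.cast_smul_eq_nsmul,
    bernsteinPolynomial.sum_smul]
  rw [← Nat.cast_smul_eq_nsmul K, inv_smul_smul₀ hn]

theorem sum_div_sq_smul_bernsteinPolynomial {K : Type*} [Field K] {n : ℕ} (hn : (n : K) ≠ 0) :
    ∑ k ∈ Finset.range (n + 1), (k / n : K) ^ 2 • bernsteinPolynomial K n k =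
      Polynomial.X ^ 2 + (n : K)⁻¹ • (Polynomial.X - Polynomial.X ^ 2) := by
  have hk (k : ℕ) : k ^ 2 = k * (k - 1) + k := by
    cases k with
    | zero => rfl
    | succ k => simp only [Nat.add_sub_cancel]; ring
  have second_moment : ∑ k ∈ Finset.range (n + 1), k ^ 2 • bernsteinPolynomial K n k =
      (n * (n - 1)) • Polynomial.X ^ 2 + n • Polynomial.X := by
    simp only [hk, add_smul, Finset.sum_add_distrib, bernsteinPolynomial.sum_mul_smul,
      bernsteinPolynomial.sum_smul]
  have hn_pos : 0 < n := Nat.pos_of_ne_zero fun h => hn (by simp [h])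
  simp only [div_eq_inv_mul, mul_pow, mul_smul, ← Finset.smul_sum, ← Nat.cast_pow,
    Nat.cast_smul_eq_nsmul, second_moment]
  simp only [← Nat.cast_smul_eq_nsmul K, Nat.cast_pred hn_pos]
  match_scalars <;> field_simp
  ring

variable {A : Type*} [CStarAlgebra A] [PartialOrder A] [StarOrderedRing A]

theorem aeval_bernsteinPolynomial_nonneg {x : A} (h0 : 0 ≤ x) (h1 : x ≤ 1) (n k : ℕ) :
    0 ≤ Polynomial.aeval x (bernsteinPolynomial ℝ n k) := by
  have hcomm : Commute (x ^ k) ((1 - x) ^ (n - k)) :=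
    ((Commute.one_right x).sub_right (.refl x)).pow_pow _ _
  have hprod : 0 ≤ x ^ k * (1 - x) ^ (n - k) :=
    hcomm.mul_nonneg (CStarAlgebra.pow_nonneg h0 k)
      (CStarAlgebra.pow_nonneg (sub_nonneg.2 h1) (n - k))
  simpa [bernsteinPolynomial, mul_assoc, ← nsmul_eq_mul] using nsmul_nonneg hprod (n.choose k)

theorem exists_unitInterval_affine_of_isSelfAdjoint {S : StarSubalgebra ℂ A} {x : S}
    (hx : IsSelfAdjoint x) : ∃ y : S, 0 ≤ y ∧ y ≤ 1 ∧ ∃ r s : ℝ, x = r • y + s • 1 := by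
  have hxA : IsSelfAdjoint (x : A) := congrArg Subtype.val hx
  set r : ℝ := ‖(x : A)‖ + 1 with hr
  have hr_pos : 0 < 2 * r := by rw [hr]; positivity
  have hnorm : algebraMap ℝ A ‖(x : A)‖ ≤ r • 1 :=
    (algebraMap_mono A (by simp [hr])).trans_eq (Algebra.algebraMap_eq_smul_one r)
  have hle : (x : A) ≤ r • 1 := hxA.le_algebraMap_norm_self.trans hnorm
  have hge : -(r • 1) ≤ (x : A) := (neg_le_neg hnorm).trans hxA.neg_algebraMap_norm_le_self
  have hy0 : 0 ≤ (2 * r)⁻¹ • ((x : A) + r • 1) :=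
    smul_nonneg (inv_nonneg.2 hr_pos.le) (neg_le_iff_add_nonneg.1 hge)
  have hy1 : (2 * r)⁻¹ • ((x : A) + r • 1) ≤ 1 :=
    calc (2 * r)⁻¹ • ((x : A) + r • 1) ≤ (2 * r)⁻¹ • (r • (1 : A) + r • 1) :=
          smul_le_smul_of_nonneg_left (add_le_add_left hle _) (inv_nonneg.2 hr_pos.le)
      _ = 1 := by rw [← add_smul, ← two_mul, inv_smul_smul₀ hr_pos.ne']
  refine ⟨(2 * r)⁻¹ • (x + r • 1), hy0, hy1, 2 * r, -r, ?_⟩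
  rw [smul_inv_smul₀ hr_pos.ne']
  module

variable {B : Type*} [CStarAlgebra B] [PartialOrder B] [StarOrderedRing B]
  {S : StarSubalgebra ℂ A} {φ : S →ₚ[ℂ] B}

theorem sq_map_le_map_sq_add_of_unitInterval (hone : φ 1 = 1) {x : S} (h0 : 0 ≤ x) (h1 : x ≤ 1)
    {n : ℕ} (hn : n ≠ 0) : φ x ^ 2 ≤ φ (x ^ 2) + (n : ℝ)⁻¹ • (φ x - φ (x ^ 2)) := by
  have hnR : (n : ℝ) ≠ 0 := Nat.cast_ne_zero.2 hn
  let b (k : ℕ) : B := φ (Polynomial.aeval x (bernsteinPolynomial ℝ n k))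
  have hb (k : ℕ) : 0 ≤ b k := by
    have hcoe : ((Polynomial.aeval x (bernsteinPolynomial ℝ n k) : S) : A) =
        Polynomial.aeval (x : A) (bernsteinPolynomial ℝ n k) := by
      simp [bernsteinPolynomial]
    refine map_nonneg φ (Subtype.coe_le_coe.1 ?_)
    exact hcoe ▸ aeval_bernsteinPolynomial_nonneg h0 h1 n k
  have moment_zero : ∑ k ∈ Finset.range (n + 1), b k = 1 := by
    simp only [b, ← map_sum, bernsteinPolynomial.sum, map_one, hone]
  have map_aeval_sum (t : ℕ → ℝ) : ∑ k ∈ Finset.range (n + 1), t k • b k =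
      φ (Polynomial.aeval x (∑ k ∈ Finset.range (n + 1), t k • bernsteinPolynomial ℝ n k)) := by
    simp only [b, map_sum, map_smul, PositiveLinearMap.map_smul_of_tower]
  have h := sq_sum_smul_le_sum_sq_smul (fun k _ => hb k) moment_zero fun k => (k / n : ℝ)
  rw [map_aeval_sum, map_aeval_sum, sum_div_smul_bernsteinPolynomial hnR,
    sum_div_sq_smul_bernsteinPolynomial hnR] at h
  simpa [PositiveLinearMap.map_smul_of_tower] using h

theorem kadison_inequality_of_unitInterval (hone : φ 1 = 1) {x : S} (h0 : 0 ≤ x) (h1 : x ≤ 1) :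
    φ x ^ 2 ≤ φ (x ^ 2) := by
  have hlim : Tendsto (fun n : ℕ => φ (x ^ 2) + (n : ℝ)⁻¹ • (φ x - φ (x ^ 2))) atTop
      (nhds (φ (x ^ 2))) := by
    simpa using tendsto_const_nhds.add
      ((tendsto_inv_atTop_nhds_zero_nat (𝕜 := ℝ)).smul_const (φ x - φ (x ^ 2)))
  exact ge_of_tendsto hlim <| (eventually_ne_atTop 0).mono fun n hn =>
    sq_map_le_map_sq_add_of_unitInterval hone h0 h1 hn

theorem kadison_inequality (hone : φ 1 = 1) {x : S} (hx : IsSelfAdjoint x) :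
    φ x ^ 2 ≤ φ (x ^ 2) := by
  obtain ⟨y, h0, h1, r, s, rfl⟩ := exists_unitInterval_affine_of_isSelfAdjoint hx
  have hdefect : φ ((r • y + s • 1) ^ 2) - φ (r • y + s • 1) ^ 2 =
      r ^ 2 • (φ (y ^ 2) - φ y ^ 2) := by
    simp only [pow_two, add_mul, mul_add, smul_mul_assoc, mul_smul_comm, one_mul, mul_one,
      map_add, PositiveLinearMap.map_smul_of_tower, hone]
    module
  rw [← sub_nonneg, hdefect]
  exact smul_nonneg (sq_nonneg r) (sub_nonneg.2 (kadison_inequality_of_unitInterval hone h0 h1))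

theorem isSelfAdjoint_map_of_isSelfAdjoint (φ : S →ₚ[ℂ] B) {x : S} (hx : IsSelfAdjoint x) :
    IsSelfAdjoint (φ x) := by
  obtain ⟨y, h0, -, r, s, rfl⟩ := exists_unitInterval_affine_of_isSelfAdjoint hx
  have hone : (0 : S) ≤ 1 := zero_le_one (α := A)
  simp only [map_add, PositiveLinearMap.map_smul_of_tower]
  exact ((IsSelfAdjoint.all r).smul (.of_nonneg (map_nonneg φ h0))).add
    ((IsSelfAdjoint.all s).smul (.of_nonneg (map_nonneg φ hone)))

end Kadison

section VonNeumann

open scoped ComplexOrder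

theorem IsCyclicVector.dense_image {M : VonNeumannAlgebra H} {ξ : H} (h : IsCyclicVector M ξ) :
    Dense ((fun x : H →L[ℂ] H => x ξ) '' M) := by
  let orbit : Submodule ℂ H := M.toStarSubalgebra.toSubalgebra.toSubmodule.map
    (ContinuousLinearMap.apply ℂ H ξ).toLinearMap
  have hspan : Submodule.span ℂ ((fun x : H →L[ℂ] H => x ξ) '' M) = orbit :=
    Submodule.span_eq orbit
  rw [IsCyclicVector, hspan] at h
  exact h

theorem IsSeparatingVector.isCyclicVector_commutant {M : VonNeumannAlgebra H} {ξ : H}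
    (hsep : IsSeparatingVector M ξ) : IsCyclicVector M.commutant ξ := by
  set V := Submodule.span ℂ ((fun x : H →L[ℂ] H => x ξ) '' M.commutant)
  let K := V.topologicalClosure
  have : CompleteSpace K := V.isClosed_topologicalClosure.completeSpace_coe
  have hξ : ξ ∈ K :=
    V.le_topologicalClosure (Submodule.subset_span ⟨1, one_mem M.commutant, rfl⟩)
  have hinv (y : H →L[ℂ] H) (hy : y ∈ M.commutant) :
      K ∈ Module.End.invtSubmodule (y : H →ₗ[ℂ] H) := by
    have hV : V ≤ V.comap (y : H →ₗ[ℂ] H) := by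
      refine Submodule.span_le.2 ?_
      rintro _ ⟨c, hc, rfl⟩
      exact Submodule.subset_span ⟨y * c, mul_mem (S := VonNeumannAlgebra H) hy hc, rfl⟩
    exact fun ζ hζ => map_mem_closure y.continuous hζ hV
  have hproj : K.starProjection ∈ M := by
    rw [VonNeumannAlgebra.IsStarProjection.mem_iff isStarProjection_starProjection]
    simpa only [Submodule.range_starProjection] using hinv
  have hone : 1 - K.starProjection = 0 := hsep _ (sub_mem (one_mem M) hproj)
    (by simp [Submodule.starProjection_eq_self_iff.2 hξ])
  have htop : K = ⊤ := by
    rw [← K.range_starProjection, ← sub_eq_zero.1 hone]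
    exact LinearMap.range_id
  exact Submodule.dense_iff_topologicalClosure_eq_top.2 htop

theorem apply_apply_eq_of_mem_commutant {M : VonNeumannAlgebra H} {a c : H →L[ℂ] H}
    (ha : a ∈ M) (hc : c ∈ M.commutant) (ζ : H) : c (a ζ) = a (c ζ) :=
  (DFunLike.congr_fun (VonNeumannAlgebra.mem_commutant_iff.1 hc a ha) ζ).symm

theorem inner_apply_nonneg_of_mem_sharpCone {M : VonNeumannAlgebra H} {ξ ζ : H}
    (hζ : ζ ∈ sharpCone M ξ) {c : H →L[ℂ] H} (hc : c ∈ M.commutant) : 0 ≤ ⟪c ζ, c ξ⟫_ℂ := by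
  have hclosed : IsClosed {η : H | 0 ≤ ⟪c η, c ξ⟫_ℂ} := isClosed_le continuous_const (by fun_prop)
  refine closure_minimal ?_ hclosed hζ
  rintro _ ⟨a, ha, ha_pos, rfl⟩
  simpa only [Set.mem_ofPred_eq, apply_apply_eq_of_mem_commutant ha hc]
    using ha_pos.inner_nonneg_left (c ξ)

theorem IsSeparatingVector.nonneg_of_apply_mem_sharpCone {M : VonNeumannAlgebra H} {ξ : H}
    (hsep : IsSeparatingVector M ξ) {a : H →L[ℂ] H} (ha : a ∈ M) (hcone : a ξ ∈ sharpCone M ξ) :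
    0 ≤ a := by
  have hinner : ∀ ζ, 0 ≤ ⟪a ζ, ζ⟫_ℂ := by
    refine hsep.isCyclicVector_commutant.dense_image.induction ?_
      (isClosed_le continuous_const (by fun_prop))
    rintro _ ⟨c, hc, rfl⟩
    simpa only [apply_apply_eq_of_mem_commutant ha hc]
      using inner_apply_nonneg_of_mem_sharpCone hcone hc
  rw [ContinuousLinearMap.nonneg_iff_isPositive, ContinuousLinearMap.isPositive_iff_complex]
  intro ζ
  obtain ⟨hre, him⟩ := RCLike.nonneg_iff.1 (hinner ζ)
  exact ⟨RCLike.ext (by simp) (by simpa using him.symm), hre⟩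

theorem IsSeparatingVector.eq_zero_of_inner_apply_self_eq_zero {M : VonNeumannAlgebra H} {ξ : H}
    (hsep : IsSeparatingVector M ξ) {a : H →L[ℂ] H} (ha : a ∈ M) (ha_nonneg : 0 ≤ a)
    (h : ⟪a ξ, ξ⟫_ℂ = 0) : a = 0 := by
  refine hsep a ha ?_
  obtain ⟨b, rfl⟩ := CStarAlgebra.nonneg_iff_eq_star_mul_self.1 ha_nonneg
  rw [ContinuousLinearMap.star_eq_adjoint, mul_apply_eq_comp,
    ContinuousLinearMap.adjoint_inner_left, inner_self_eq_zero] at h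
  simp [h]

theorem inner_sq_apply_left {a : H →L[ℂ] H} (ha : IsSelfAdjoint a) (ξ η : H) :
    ⟪(a ^ 2) ξ, η⟫_ℂ = ⟪a ξ, a η⟫_ℂ := by
  rw [pow_two, mul_apply_eq_comp]
  exact ha.isSymmetric (a ξ) η

theorem IsSeparatingVector.map_sq_of_apply_eq {M : VonNeumannAlgebra H}
    {N : StarSubalgebra ℂ (H →L[ℂ] H)} {ξ : H} (hsep : IsSeparatingVector M ξ)
    {φ : N →ₚ[ℂ] (H →L[ℂ] H)} (hmem : ∀ x, φ x ∈ M) (hfix : ∀ x : N, φ x ξ = (x : H →L[ℂ] H) ξ)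
    {x : N} (hx : IsSelfAdjoint x) : φ (x ^ 2) = φ x ^ 2 := by
  have hone : φ 1 = 1 :=
    sub_eq_zero.1 <| hsep _ (sub_mem (hmem 1) (one_mem M)) (by simp [hfix])
  refine sub_eq_zero.1 <| hsep.eq_zero_of_inner_apply_self_eq_zero
    (sub_mem (hmem _) (pow_mem (hmem x) 2)) (sub_nonneg.2 (kadison_inequality hone hx)) ?_
  have hxA : IsSelfAdjoint (x : H →L[ℂ] H) := congrArg Subtype.val hx
  rw [sub_apply, inner_sub_left, inner_sq_apply_left (isSelfAdjoint_map_of_isSelfAdjoint φ hx),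
    hfix, hfix, SubmonoidClass.coe_pow, inner_sq_apply_left hxA, sub_self]

end VonNeumann

theorem stmt2_general {M : VonNeumannAlgebra H} {N : StarSubalgebra ℂ (H →L[ℂ] H)} {ξ₀ : H}
    (hsep : IsSeparatingVector M ξ₀)
    (hcone : ∀ b ∈ N, b.IsPositive → b ξ₀ ∈ sharpCone M ξ₀) (α : N →ₗ[ℂ] (H →L[ℂ] H))
    (hmem : ∀ x, α x ∈ M) (hfix : ∀ x : N, α x ξ₀ = (x : H →L[ℂ] H) ξ₀) (x y : N) :
    α (x * y + y * x) = α x * α y + α y * α x := by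
  have hpos (b : N) (hb : 0 ≤ b) : 0 ≤ α b :=
    hsep.nonneg_of_apply_mem_sharpCone (hmem b) <| hfix b ▸
      hcone b b.2 ((ContinuousLinearMap.nonneg_iff_isPositive (b : H →L[ℂ] H)).1 hb)
  exact map_mul_add_mul_comm_of_map_sq α
    (fun _ ha => hsep.map_sq_of_apply_eq (φ := .mk₀ α hpos) hmem hfix ha) x y

/-- The map `α` (linear on `N`, taking values in `M`, with `α(x) ξ₀ = x ξ₀`)
is a Jordan homomorphism. -/
theorem stmt2 (M N : VonNeumannAlgebra H) (ξ₀ : H)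
    (hcyc : IsCyclicVector M ξ₀) (hsep : IsSeparatingVector M ξ₀)
    (hsub : closure {ζ : H | ∃ b : H →L[ℂ] H, b ∈ N ∧ b.IsPositive ∧ b ξ₀ = ζ} ⊆
      sharpCone M ξ₀)
    (α : (H →L[ℂ] H) → (H →L[ℂ] H))
    (hadd : ∀ x ∈ N, ∀ y ∈ N, α (x + y) = α x + α y)
    (hsmul : ∀ (c : ℂ), ∀ x ∈ N, α (c • x) = c • α x)
    (hmem : ∀ x ∈ N, α x ∈ M)
    (hfix : ∀ x ∈ N, (α x) ξ₀ = x ξ₀) :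
    ∀ x ∈ N, ∀ y ∈ N, α (x * y + y * x) = α x * α y + α y * α x :=
  fun x hx y hy => stmt2_general (N := N.toStarSubalgebra) hsep
    (fun b hb hb_pos => hsub (subset_closure ⟨b, hb, hb_pos, rfl⟩))
    { toFun := fun x => α x
      map_add' := fun x y => hadd x x.2 y y.2
      map_smul' := fun c x => hsmul c x x.2 }
    (fun x => hmem x x.2) (fun x => hfix x x.2) ⟨x, hx⟩ ⟨y, hy⟩
end

section
/- Let H be a complex Hilbert space, M a von Neumann algebra acting on H, ξ₀ a cyclic and separating vector for M, and N another von Neumann algebra acting on H with the closure of {b ξ₀ : b ∈ N, b ≥ 0} contained in P♯. Let α : N → B(H) be a linear map such that α(x) ∈ M and α(x) ξ₀ = x ξ₀ for every x ∈ N. Then α is normal in the following sense: for every net (xᵢ) in N with sup ‖xᵢ‖ < ∞ that converges to x ∈ N in the weak operator topology, the net (α(xᵢ)) converges to α(x) in the weak operator topology. -/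
open scoped InnerProductSpace
open Filter

variable {H : Type*} [NormedAddCommGroup H] [InnerProductSpace ℂ H] [CompleteSpace H]

/-!
Since `ξ₀` separates `M`, the equation `α x ξ₀ = x ξ₀` determines `α x`, so `α` has closed graph and
is bounded. For `y` in the commutant of `M`, `⟪α x (y ξ₀), η⟫ = ⟪x ξ₀, y† η⟫`, so weak convergence
of `xᵢ ξ₀` gives weak convergence of `α xᵢ` on the vectors `y ξ₀`. These are dense because a
separating vector for `M` is cyclic for the commutant, and boundedness of `α xᵢ` extends the
convergence to all of `H`.
-/

theorem continuous_of_injOn_of_continuous_comp {𝕜 E F G : Type*} [NontriviallyNormedField 𝕜]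
    [NormedAddCommGroup E] [NormedSpace 𝕜 E] [CompleteSpace E]
    [NormedAddCommGroup F] [NormedSpace 𝕜 F] [CompleteSpace F] [TopologicalSpace G] [T2Space G]
    {g : E →ₗ[𝕜] F} {φ : F → G} {s : Set F} (hs : IsClosed s) (hgs : ∀ x, g x ∈ s)
    (hφ : Continuous φ) (hinj : s.InjOn φ) (hφg : Continuous (φ ∘ g)) : Continuous g := by
  refine g.continuous_of_isClosed_graph ?_
  have hgraph : (g.graph : Set (E × F)) = Prod.snd ⁻¹' s ∩ {p | φ p.2 = (φ ∘ g) p.1} := by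
    ext ⟨x, y⟩
    change y = g x ↔ y ∈ s ∧ φ y = φ (g x)
    constructor
    · rintro rfl
      exact ⟨hgs x, rfl⟩
    · rintro ⟨hy, hxy⟩
      exact hinj hy (hgs x) hxy
  rw [hgraph]
  exact (hs.preimage continuous_snd).inter
    (isClosed_eq (hφ.comp continuous_snd) (hφg.comp continuous_fst))

theorem tendsto_apply_of_norm_le_of_dense_span {𝕜 𝕜' E F ι : Type*}
    [NontriviallyNormedField 𝕜] [NontriviallyNormedField 𝕜'] {σ : 𝕜 →+* 𝕜'} [RingHomIsometric σ]
    [SeminormedAddCommGroup E] [NormedSpace 𝕜 E] [SeminormedAddCommGroup F] [NormedSpace 𝕜' F]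
    {l : Filter ι} {T : ι → E →SL[σ] F} {T₀ : E →SL[σ] F} {C : ℝ} (hC : ∀ i, ‖T i‖ ≤ C)
    {s : Set E} (hs : Dense (Submodule.span 𝕜 s : Set E))
    (hT : ∀ v ∈ s, Tendsto (T · v) l (nhds (T₀ v))) (v : E) :
    Tendsto (T · v) l (nhds (T₀ v)) := by
  have hspan : ∀ w ∈ Submodule.span 𝕜 s, Tendsto (T · w) l (nhds (T₀ w)) := fun w hw ↦ by
    induction hw using Submodule.span_induction with
    | mem w hw => exact hT w hw
    | zero => simpa only [map_zero] using tendsto_const_nhds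
    | add w₁ w₂ _ _ h₁ h₂ => simpa only [map_add] using h₁.add h₂
    | smul c w _ h => simpa only [map_smulₛₗ] using h.const_smul (σ c)
  have hequi : Equicontinuous ((↑) ∘ T : ι → E → F) ↔ ∃ C, ∀ i, ‖T i‖ ≤ C :=
    (NormedSpace.equicontinuous_TFAE T).out 1 5
  have hclosed := (hequi.2 ⟨C, hC⟩).isClosed_setOfPred_tendsto (l := l) T₀.continuous
  exact hclosed.closure_subset_iff.2 hspan (hs v)

theorem isClosed_vonNeumannAlgebra (M : VonNeumannAlgebra H) :
    IsClosed (M : Set (H →L[ℂ] H)) := by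
  rw [← M.centralizer_centralizer]
  exact Set.isClosed_centralizer _

/-- The cyclic subspace `[M ξ]`: the closed linear span of the orbit of `ξ` under `M`. It serves to
turn density of an orbit into a statement about the projection onto its closed span. -/
def cyclicSubspace (M : VonNeumannAlgebra H) (ξ : H) : Submodule ℂ H :=
  (Submodule.span ℂ ((fun x : H →L[ℂ] H ↦ x ξ) '' (M : Set (H →L[ℂ] H)))).topologicalClosure

instance (M : VonNeumannAlgebra H) (ξ : H) : (cyclicSubspace M ξ).HasOrthogonalProjection :=
  inferInstanceAs (Submodule.topologicalClosure _).HasOrthogonalProjection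

section CyclicSubspace

variable {M : VonNeumannAlgebra H} {ξ : H}

theorem isCyclicVector_iff_cyclicSubspace_eq_top :
    IsCyclicVector M ξ ↔ cyclicSubspace M ξ = ⊤ :=
  Submodule.dense_iff_topologicalClosure_eq_top

theorem self_mem_cyclicSubspace : ξ ∈ cyclicSubspace M ξ :=
  Submodule.le_topologicalClosure _ <| Submodule.subset_span ⟨1, one_mem M, rfl⟩

theorem cyclicSubspace_mem_invtSubmodule {y : H →L[ℂ] H} (hy : y ∈ M) :
    cyclicSubspace M ξ ∈ Module.End.invtSubmodule (y : H →ₗ[ℂ] H) := by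
  have hspan : Set.MapsTo y (Submodule.span ℂ ((fun x : H →L[ℂ] H ↦ x ξ) '' M))
      (Submodule.span ℂ ((fun x : H →L[ℂ] H ↦ x ξ) '' M)) := by
    change Submodule.span ℂ _ ≤ (Submodule.span ℂ _).comap (y : H →ₗ[ℂ] H)
    rw [Submodule.span_le]
    rintro _ ⟨x, hx, rfl⟩
    exact Submodule.subset_span ⟨y * x, mul_mem hy hx, rfl⟩
  exact hspan.closure y.continuous

theorem starProjection_cyclicSubspace_commutant_mem :
    (cyclicSubspace M.commutant ξ).starProjection ∈ M := by
  rw [VonNeumannAlgebra.IsStarProjection.mem_iff isStarProjection_starProjection,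
    Submodule.range_starProjection]
  exact fun y hy ↦ cyclicSubspace_mem_invtSubmodule hy

end CyclicSubspace

namespace IsSeparatingVector

variable {M : VonNeumannAlgebra H} {ξ : H}

theorem injOn_apply (hsep : IsSeparatingVector M ξ) :
    Set.InjOn (fun x : H →L[ℂ] H ↦ x ξ) M :=
  fun _ hx _ hy hxy ↦ sub_eq_zero.1 <| hsep _ (sub_mem hx hy) (sub_eq_zero.2 hxy)

theorem isCyclicVector_commutant_s4 (hsep : IsSeparatingVector M ξ) :
    IsCyclicVector M.commutant ξ := by
  have hproj : (cyclicSubspace M.commutant ξ).starProjection = 1 :=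
    hsep.injOn_apply starProjection_cyclicSubspace_commutant_mem (one_mem M)
      (Submodule.starProjection_eq_self_iff.2 self_mem_cyclicSubspace)
  rw [isCyclicVector_iff_cyclicSubspace_eq_top, ← Submodule.range_starProjection
    (cyclicSubspace M.commutant ξ), hproj]
  exact LinearMap.range_id

theorem continuous_of_continuous_apply (hsep : IsSeparatingVector M ξ) {E : Type*}
    [NormedAddCommGroup E] [NormedSpace ℂ E] [CompleteSpace E] {α : E →ₗ[ℂ] (H →L[ℂ] H)}
    (hmem : ∀ x, α x ∈ M) (hα : Continuous fun x ↦ α x ξ) : Continuous α :=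
  continuous_of_injOn_of_continuous_comp (isClosed_vonNeumannAlgebra M) hmem
    (continuous_eval_const ξ) hsep.injOn_apply hα

theorem tendsto_inner_of_norm_le_of_tendsto_inner (hsep : IsSeparatingVector M ξ)
    {ι : Type*} {l : Filter ι} {T : ι → H →L[ℂ] H} {T₀ : H →L[ℂ] H} (hT : ∀ i, T i ∈ M)
    (hT₀ : T₀ ∈ M) {C : ℝ} (hC : ∀ i, ‖T i‖ ≤ C)
    (hξ : ∀ η, Tendsto (fun i ↦ ⟪T i ξ, η⟫_ℂ) l (nhds ⟪T₀ ξ, η⟫_ℂ))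
    (ζ η : H) : Tendsto (fun i ↦ ⟪T i ζ, η⟫_ℂ) l (nhds ⟪T₀ ζ, η⟫_ℂ) := by
  have hnorm : ∀ i, ‖(innerSLFlip ℂ η).comp (T i)‖ ≤ ‖innerSLFlip ℂ η‖ * C := fun i ↦
    (ContinuousLinearMap.opNorm_comp_le _ _).trans (by gcongr; exact hC i)
  refine tendsto_apply_of_norm_le_of_dense_span (T₀ := (innerSLFlip ℂ η).comp T₀) hnorm
    hsep.isCyclicVector_commutant_s4 ?_ ζ
  rintro _ ⟨y, hy, rfl⟩
  have hcomm : ∀ S ∈ M, ⟪S (y ξ), η⟫_ℂ = ⟪S ξ, ContinuousLinearMap.adjoint y η⟫_ℂ := fun S hS ↦ by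
    have hSy : S (y ξ) = y (S ξ) :=
      DFunLike.congr_fun (VonNeumannAlgebra.mem_commutant_iff.1 hy S hS) ξ
    rw [hSy, ContinuousLinearMap.adjoint_inner_right]
  simpa only [ContinuousLinearMap.comp_apply, innerSLFlip_apply_apply, hcomm _ hT₀,
    hcomm _ (hT _)] using hξ (ContinuousLinearMap.adjoint y η)

end IsSeparatingVector

theorem stmt4_general {M : VonNeumannAlgebra H} {ξ₀ : H} (hsep : IsSeparatingVector M ξ₀)
    {V : Submodule ℂ (H →L[ℂ] H)} (hV : IsClosed (V : Set (H →L[ℂ] H)))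
    (α : V →ₗ[ℂ] (H →L[ℂ] H)) (hmem : ∀ x, α x ∈ M) (hfix : ∀ x, α x ξ₀ = (x : H →L[ℂ] H) ξ₀)
    {ι : Type*} {l : Filter ι} {x : ι → V} {x₀ : V} (hbdd : ∃ C : ℝ, ∀ i, ‖x i‖ ≤ C)
    (hx : ∀ η : H, Tendsto (fun i ↦ ⟪(x i : H →L[ℂ] H) ξ₀, η⟫_ℂ) l
      (nhds ⟪(x₀ : H →L[ℂ] H) ξ₀, η⟫_ℂ)) (ζ η : H) :
    Tendsto (fun i ↦ ⟪α (x i) ζ, η⟫_ℂ) l (nhds ⟪α x₀ ζ, η⟫_ℂ) := by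
  obtain ⟨C, hC⟩ := hbdd
  have : CompleteSpace V := hV.completeSpace_coe
  have hα : Continuous α := hsep.continuous_of_continuous_apply hmem <| by
    simp only [hfix]
    fun_prop
  let A : V →L[ℂ] (H →L[ℂ] H) := ⟨α, hα⟩
  have hbound : ∀ i, ‖α (x i)‖ ≤ ‖A‖ * C := fun i ↦ A.le_opNorm_of_le (hC i)
  exact hsep.tendsto_inner_of_norm_le_of_tendsto_inner (fun i ↦ hmem (x i)) (hmem x₀) hbound
    (by simpa only [hfix] using hx) ζ η

/-- The map `α` is normal: it is WOT-continuous on bounded nets of `N`. -/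
theorem stmt4 (M N : VonNeumannAlgebra H) (ξ₀ : H)
    (hcyc : IsCyclicVector M ξ₀) (hsep : IsSeparatingVector M ξ₀)
    (hsub : closure {ζ : H | ∃ b : H →L[ℂ] H, b ∈ N ∧ b.IsPositive ∧ b ξ₀ = ζ} ⊆
      sharpCone M ξ₀)
    (α : (H →L[ℂ] H) → (H →L[ℂ] H))
    (hadd : ∀ x ∈ N, ∀ y ∈ N, α (x + y) = α x + α y)
    (hsmul : ∀ (c : ℂ), ∀ x ∈ N, α (c • x) = c • α x)
    (hmem : ∀ x ∈ N, α x ∈ M)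
    (hfix : ∀ x ∈ N, (α x) ξ₀ = x ξ₀)
    (ι : Type*) (l : Filter ι) [l.NeBot]
    (x : ι → (H →L[ℂ] H)) (hxN : ∀ i, x i ∈ N)
    (hbdd : ∃ C : ℝ, ∀ i, ‖x i‖ ≤ C)
    (x₀ : H →L[ℂ] H) (hx₀ : x₀ ∈ N)
    (hWOT : ∀ ζ η : H, Tendsto (fun i => ⟪(x i) ζ, η⟫_ℂ) l (nhds ⟪x₀ ζ, η⟫_ℂ)) :
    ∀ ζ η : H, Tendsto (fun i => ⟪(α (x i)) ζ, η⟫_ℂ) l (nhds ⟪(α x₀) ζ, η⟫_ℂ) := by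
  let αN : N.toStarSubalgebra.toSubalgebra.toSubmodule →ₗ[ℂ] (H →L[ℂ] H) :=
    ⟨⟨fun z ↦ α z, fun y z ↦ hadd y y.2 z z.2⟩, fun c z ↦ hsmul c z z.2⟩
  exact stmt4_general (x := fun i ↦ ⟨x i, hxN i⟩) (x₀ := ⟨x₀, hx₀⟩) hsep
    (isClosed_vonNeumannAlgebra N) αN (fun z ↦ hmem z z.2) (fun z ↦ hfix z z.2) hbdd (hWOT ξ₀)
end

section
/- Let H be a complex Hilbert space, M a von Neumann algebra acting on H, and ξ₀ a cyclic and separating vector for M. Let N be another von Neumann algebra acting on H such that ξ₀ is cyclic for N and the closure of {b ξ₀ : b ∈ N, b ≥ 0} is contained in P♯. Then: (1) ξ₀ is separating for N; (2) there exists a projection e in the center of N (e ∈ N and e commutes with every element of N) such that x e ∈ M for every x ∈ N; (3) the vector (1 − e) ξ₀ is tracial for N(1−e), i.e. ⟨x y (1−e) ξ₀, (1−e) ξ₀⟩ = ⟨y x (1−e) ξ₀, (1−e) ξ₀⟩ for all x, y ∈ N. -/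
open scoped InnerProductSpace
open Filter

variable {H : Type*} [NormedAddCommGroup H] [InnerProductSpace ℂ H] [CompleteSpace H]

/-!
Testing against `M.commutant`, the inclusion of the cones says that every positive `x ∈ N` defines
a bounded positive form on the orbit of `ξ₀` under `M.commutant`; hence there is a positive unital
map `Φ : N → M` with `Φ x ξ₀ = x ξ₀`. For self-adjoint `b`, Kadison's inequality gives
`Φ (b * b) - Φ b * Φ b ≥ 0`, and the vector state of `ξ₀` vanishes on this element of `M`; since
`ξ₀` separates `M`, the map `Φ` is a Jordan `*`-homomorphism. The defects
`Φ (x * y) - Φ x * Φ y` and `Φ (z * w) - Φ w * Φ z` then annihilate each other, so the projection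
`e` onto the common kernel of the former commutes with `Φ`, with `Φ` multiplicative on its range
and antimultiplicative on the complement. Cyclicity of `ξ₀` for `N` gives `x * e = Φ x * e` and
puts `e` in `N.commutant`, while antimultiplicativity makes `(1 - e) ξ₀` tracial. Finally, for a
projection `q ∈ N.commutant` with `q ξ₀` tracial, the estimate
`‖star x (y (q ξ₀))‖ ≤ ‖y‖ * ‖q (x ξ₀)‖` shows that `N.commutant` leaves the range of `q`
invariant, so that `q ∈ N`.
-/

section SelfAdjoint

variable {A V : Type*} [AddCommGroup A] [Module ℂ A] [StarAddMonoid A] [StarModule ℂ A]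

theorem induction_isSelfAdjoint {p : A → Prop} (isSelfAdjoint : ∀ x, IsSelfAdjoint x → p x)
    (add_I_smul : ∀ x y, p x → p y → p (x + Complex.I • y)) (x : A) : p x := by
  rw [← realPart_add_I_smul_imaginaryPart x]
  exact add_I_smul _ _ (isSelfAdjoint _ (realPart x).2) (isSelfAdjoint _ (imaginaryPart x).2)

theorem apply_add_apply_swap_eq_zero_of_isSelfAdjoint [AddCommGroup V] [Module ℂ V]
    (f : A →ₗ[ℂ] A →ₗ[ℂ] V) (hf : ∀ x, IsSelfAdjoint x → f x x = 0) (x y : A) :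
    f x y + f y x = 0 := by
  have polar (x y : A) (hx : IsSelfAdjoint x) (hy : IsSelfAdjoint y) : f x y + f y x = 0 := by
    have h := hf (x + y) (hx.add hy)
    simp only [map_add, LinearMap.add_apply, hf x hx, hf y hy, zero_add, add_zero] at h
    rw [add_comm, h]
  induction x using induction_isSelfAdjoint with
  | isSelfAdjoint x hx =>
    induction y using induction_isSelfAdjoint with
    | isSelfAdjoint y hy => exact polar x y hx hy
    | add_I_smul y z hy hz =>
      simp only [map_add, map_smul, LinearMap.add_apply, LinearMap.smul_apply]
      rw [add_add_add_comm, hy, ← smul_add, hz, smul_zero, zero_add]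
  | add_I_smul x z hx hz =>
    simp only [map_add, map_smul, LinearMap.add_apply, LinearMap.smul_apply]
    rw [add_add_add_comm, hx, ← smul_add, hz, smul_zero, zero_add]

end SelfAdjoint

section JordanHom

variable {R A B : Type*} [CommRing R] [Ring A] [Algebra R A] [Ring B] [Algebra R B]

/-- The failure of a linear map `Φ` to be multiplicative, as a bilinear map. -/
def homDefect (Φ : A →ₗ[R] B) : A →ₗ[R] A →ₗ[R] B :=
  LinearMap.mk₂ R (fun x y => Φ (x * y) - Φ x * Φ y)
    (fun x x' y => by simp only [add_mul, map_add]; abel)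
    (fun c x y => by simp only [smul_mul_assoc, map_smul, smul_sub])
    (fun x y y' => by simp only [mul_add, map_add]; abel)
    (fun c x y => by simp only [mul_smul_comm, map_smul, smul_sub])

/-- The failure of a linear map `Φ` to be antimultiplicative, as a bilinear map. -/
def antiDefect (Φ : A →ₗ[R] B) : A →ₗ[R] A →ₗ[R] B :=
  LinearMap.mk₂ R (fun x y => Φ (x * y) - Φ y * Φ x)
    (fun x x' y => by simp only [add_mul, mul_add, map_add]; abel)
    (fun c x y => by simp only [smul_mul_assoc, mul_smul_comm, map_smul, smul_sub])
    (fun x y y' => by simp only [mul_add, add_mul, map_add]; abel)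
    (fun c x y => by simp only [smul_mul_assoc, mul_smul_comm, map_smul, smul_sub])

theorem homDefect_apply (Φ : A →ₗ[R] B) (x y : A) :
    homDefect Φ x y = Φ (x * y) - Φ x * Φ y := rfl

theorem antiDefect_apply (Φ : A →ₗ[R] B) (x y : A) :
    antiDefect Φ x y = Φ (x * y) - Φ y * Φ x := rfl

theorem homDefect_smul_add_smul_one_self {Φ : A →ₗ[R] B} (hΦ : Φ 1 = 1) (c d : R) (x : A) :
    homDefect Φ (c • x + d • 1) (c • x + d • 1) = c ^ 2 • homDefect Φ x x := by
  have one_left (y : A) : homDefect Φ 1 y = 0 := by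
    rw [homDefect_apply, hΦ, one_mul, one_mul, sub_self]
  have one_right (y : A) : homDefect Φ y 1 = 0 := by
    rw [homDefect_apply, hΦ, mul_one, mul_one, sub_self]
  simp only [map_add, map_smul, LinearMap.add_apply, LinearMap.smul_apply, one_left, one_right,
    smul_zero, add_zero, smul_smul, pow_two]

/-- A Jordan homomorphism: a unital linear map preserving the Jordan product `x * y + y * x`. -/
structure IsJordanHom (Φ : A →ₗ[R] B) : Prop where
  map_one : Φ 1 = 1
  map_jordan : ∀ x y, Φ (x * y) + Φ (y * x) = Φ x * Φ y + Φ y * Φ x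

theorem antiDefect_sub_homDefect (Φ : A →ₗ[R] B) (x y : A) :
    antiDefect Φ x y - homDefect Φ x y = Φ x * Φ y - Φ y * Φ x := by
  simp only [homDefect_apply, antiDefect_apply, sub_sub_sub_cancel_left]

namespace IsJordanHom

variable {Φ : A →ₗ[R] B}

theorem homDefect_swap (hΦ : IsJordanHom Φ) (x y : A) :
    homDefect Φ x y = -homDefect Φ y x := by
  simp only [homDefect_apply]
  linear_combination (norm := noncomm_ring) hΦ.map_jordan x y

theorem antiDefect_swap (hΦ : IsJordanHom Φ) (x y : A) :
    antiDefect Φ x y = -antiDefect Φ y x := by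
  simp only [antiDefect_apply]
  linear_combination (norm := noncomm_ring) hΦ.map_jordan x y

theorem map_commutator (hΦ : IsJordanHom Φ) (x y : A) :
    Φ (x * y - y * x) = homDefect Φ x y + antiDefect Φ x y := by
  simp only [homDefect_apply, antiDefect_apply, map_sub]
  linear_combination (norm := noncomm_ring) -hΦ.map_jordan x y

variable [IsAddTorsionFree B]

theorem map_mul_self (hΦ : IsJordanHom Φ) (x : A) : Φ (x * x) = Φ x * Φ x := by
  have h := hΦ.map_jordan x x
  rw [← two_nsmul, ← two_nsmul] at h
  exact nsmul_right_injective two_ne_zero h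

theorem homDefect_self (hΦ : IsJordanHom Φ) (x : A) : homDefect Φ x x = 0 := by
  rw [homDefect_apply, hΦ.map_mul_self, sub_self]

theorem map_mul_mul_self (hΦ : IsJordanHom Φ) (x y : A) :
    Φ (x * (y * x)) = Φ x * (Φ y * Φ x) := by
  have h₁ := hΦ.map_jordan x (x * y + y * x)
  have h₂ := hΦ.map_jordan (x * x) y
  have h₃ := hΦ.map_jordan x y
  rw [hΦ.map_mul_self] at h₂
  simp only [mul_add, add_mul, map_add, mul_assoc] at h₁ h₂
  apply nsmul_right_injective two_ne_zero
  linear_combination (norm := noncomm_ring) h₁ - h₂ + Φ x * h₃ + h₃ * Φ x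

theorem map_triple (hΦ : IsJordanHom Φ) (x y z : A) :
    Φ (x * (y * z)) + Φ (z * (y * x)) = Φ x * (Φ y * Φ z) + Φ z * (Φ y * Φ x) := by
  have h := hΦ.map_mul_mul_self (x + z) y
  simp only [mul_add, add_mul, map_add] at h
  linear_combination (norm := noncomm_ring)
    h - hΦ.map_mul_mul_self x y - hΦ.map_mul_mul_self z y

theorem homDefect_mul_left (hΦ : IsJordanHom Φ) (x b : A) :
    homDefect Φ (b * x) b = homDefect Φ x b * Φ b := by
  simp only [homDefect_apply, mul_assoc]
  linear_combination (norm := noncomm_ring) hΦ.map_mul_mul_self b x - hΦ.map_jordan x b * Φ b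

theorem antiDefect_mul_left (hΦ : IsJordanHom Φ) (x b : A) :
    antiDefect Φ (b * x) b = Φ b * antiDefect Φ x b := by
  simp only [antiDefect_apply, mul_assoc]
  linear_combination (norm := noncomm_ring) hΦ.map_mul_mul_self b x - Φ b * hΦ.map_jordan x b

theorem map_mul_commutator (hΦ : IsJordanHom Φ) (w x b : A) :
    Φ (w * (x * b - b * x)) = Φ w * antiDefect Φ x b + homDefect Φ x b * Φ w := by
  have h : Φ (w * (x * b - b * x) - (x * b - b * x) * w) =
      Φ w * (antiDefect Φ x b - homDefect Φ x b) -
        (antiDefect Φ x b - homDefect Φ x b) * Φ w := by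
    rw [antiDefect_sub_homDefect]
    simp only [mul_sub, sub_mul, map_sub, mul_assoc]
    linear_combination (norm := noncomm_ring) hΦ.map_triple w x b - hΦ.map_triple w b x
  have h' := hΦ.map_jordan w (x * b - b * x)
  rw [map_sub] at h
  rw [hΦ.map_commutator] at h'
  apply nsmul_right_injective two_ne_zero
  linear_combination (norm := noncomm_ring) h + h'

theorem comm_homDefect (hΦ : IsJordanHom Φ) (w x b : A) :
    homDefect Φ x b * Φ w - Φ w * homDefect Φ x b = homDefect Φ w (x * b - b * x) := by
  rw [homDefect_apply Φ w, hΦ.map_mul_commutator, hΦ.map_commutator]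
  noncomm_ring

theorem comm_antiDefect (hΦ : IsJordanHom Φ) (w x b : A) :
    Φ w * antiDefect Φ x b - antiDefect Φ x b * Φ w = antiDefect Φ w (x * b - b * x) := by
  rw [antiDefect_apply Φ w, hΦ.map_mul_commutator, hΦ.map_commutator]
  noncomm_ring

theorem homDefect_mul_antiDefect_add (hΦ : IsJordanHom Φ) (x b w : A) :
    homDefect Φ x b * Φ w * antiDefect Φ x b + antiDefect Φ x b * Φ w * homDefect Φ x b = 0 := by
  have h := hΦ.map_jordan x b
  have h₁ := hΦ.map_triple (x * b) w (b * x)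
  have h₂ := hΦ.map_mul_mul_self x (b * (w * b))
  have h₃ := hΦ.map_mul_mul_self b (x * (w * x))
  rw [hΦ.map_mul_mul_self b w] at h₂
  rw [hΦ.map_mul_mul_self x w] at h₃
  simp only [mul_assoc] at h₁ h₂ h₃
  simp only [homDefect_apply, antiDefect_apply]
  linear_combination (norm := noncomm_ring)
    Φ (x * b) * Φ w * h + h * Φ w * Φ (x * b) + h₁ - h₂ - h₃

theorem antiDefect_mul_homDefect_self (hΦ : IsJordanHom Φ) (x b : A) :
    antiDefect Φ x b * homDefect Φ x b = 0 := by
  have anticomm := hΦ.homDefect_mul_antiDefect_add x b 1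
  have comm := hΦ.comm_homDefect (x * b - b * x) x b
  rw [hΦ.homDefect_self, hΦ.map_commutator] at comm
  rw [hΦ.map_one, mul_one, mul_one] at anticomm
  rw [← nsmul_eq_zero_iff_right two_ne_zero]
  linear_combination (norm := noncomm_ring) anticomm - comm

end IsJordanHom
end JordanHom

section JordanStarHom

variable {A B : Type*} [Ring A] [StarRing A] [Algebra ℂ A] [CStarAlgebra B]

instance isAddTorsionFree_of_cstarAlgebra : IsAddTorsionFree B :=
  letI : Module ℚ B := Module.compHom B (algebraMap ℚ ℂ)
  .of_module_rat B

/-- A Jordan homomorphism that commutes with the involutions. -/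
structure IsJordanStarHom (Φ : A →ₗ[ℂ] B) : Prop extends IsJordanHom Φ where
  map_star : ∀ x, Φ (star x) = star (Φ x)

namespace IsJordanStarHom

variable {Φ : A →ₗ[ℂ] B}

theorem star_homDefect (hΦ : IsJordanStarHom Φ) (x y : A) :
    star (homDefect Φ x y) = homDefect Φ (star y) (star x) := by
  simp only [homDefect_apply, star_sub, star_mul, ← hΦ.map_star]

theorem star_antiDefect (hΦ : IsJordanStarHom Φ) (x y : A) :
    star (antiDefect Φ x y) = antiDefect Φ (star y) (star x) := by
  simp only [antiDefect_apply, star_sub, star_mul, ← hΦ.map_star]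

theorem star_homDefect_of_isSelfAdjoint (hΦ : IsJordanStarHom Φ) {x y : A}
    (hx : IsSelfAdjoint x) (hy : IsSelfAdjoint y) :
    star (homDefect Φ x y) = -homDefect Φ x y := by
  rw [hΦ.star_homDefect, hx.star_eq, hy.star_eq, hΦ.homDefect_swap]

theorem star_antiDefect_of_isSelfAdjoint (hΦ : IsJordanStarHom Φ) {x y : A}
    (hx : IsSelfAdjoint x) (hy : IsSelfAdjoint y) :
    star (antiDefect Φ x y) = -antiDefect Φ x y := by
  rw [hΦ.star_antiDefect, hx.star_eq, hy.star_eq, hΦ.antiDefect_swap]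

-- With `S = homDefect Φ x b` and `T = antiDefect Φ z d` skew-adjoint, `S * T * star (S * T)` is
-- `S * T * T * S`, which `h` turns into a multiple of `antiDefect Φ x b * S = 0`.
theorem homDefect_mul_antiDefect_eq_zero_of_mul (hΦ : IsJordanStarHom Φ) {x b z d : A} {t : B}
    (hx : IsSelfAdjoint x) (hb : IsSelfAdjoint b) (hz : IsSelfAdjoint z) (hd : IsSelfAdjoint d)
    (h : homDefect Φ x b * antiDefect Φ z d * antiDefect Φ z d = t * antiDefect Φ x b) :
    homDefect Φ x b * antiDefect Φ z d = 0 := by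
  rw [← CStarRing.mul_star_self_eq_zero_iff, star_mul,
    hΦ.star_homDefect_of_isSelfAdjoint hx hb, hΦ.star_antiDefect_of_isSelfAdjoint hz hd]
  linear_combination (norm := noncomm_ring)
    h * homDefect Φ x b + t * hΦ.antiDefect_mul_homDefect_self x b

variable [StarModule ℂ A]

theorem homDefect_mul_map_mul_antiDefect_self (hΦ : IsJordanStarHom Φ) {x b : A}
    (hx : IsSelfAdjoint x) (hb : IsSelfAdjoint b) (w : A) :
    homDefect Φ x b * Φ w * antiDefect Φ x b = 0 := by
  induction w using induction_isSelfAdjoint with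
  | isSelfAdjoint w hw =>
    have hstar : star (homDefect Φ x b * Φ w * antiDefect Φ x b) =
        antiDefect Φ x b * Φ w * homDefect Φ x b := by
      rw [star_mul, star_mul, hΦ.star_homDefect_of_isSelfAdjoint hx hb,
        hΦ.star_antiDefect_of_isSelfAdjoint hx hb, ← hΦ.map_star, hw.star_eq]
      noncomm_ring
    rw [← CStarRing.star_mul_self_eq_zero_iff, hstar,
      eq_neg_of_add_eq_zero_right (hΦ.homDefect_mul_antiDefect_add x b w)]
    linear_combination (norm := noncomm_ring)
      -(homDefect Φ x b * Φ w) * hΦ.antiDefect_mul_homDefect_self x b * (Φ w * antiDefect Φ x b)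
  | add_I_smul v w hv hw =>
    simp only [map_add, map_smul, mul_add, add_mul, mul_smul_comm, smul_mul_assoc, hv, hw,
      smul_zero, add_zero]

theorem homDefect_mul_map_mul_antiDefect_add_swap (hΦ : IsJordanStarHom Φ) {b : A}
    (hb : IsSelfAdjoint b) (x z w : A) :
    homDefect Φ x b * Φ w * antiDefect Φ z b + homDefect Φ z b * Φ w * antiDefect Φ x b = 0 :=
  apply_add_apply_swap_eq_zero_of_isSelfAdjoint
    ((LinearMap.mul ℂ B).compl₁₂ (LinearMap.mulRight ℂ (Φ w) ∘ₗ (homDefect Φ).flip b)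
      ((antiDefect Φ).flip b))
    (fun _ hx => hΦ.homDefect_mul_map_mul_antiDefect_self hx hb w) x z

theorem homDefect_mul_antiDefect_common_of_isSelfAdjoint (hΦ : IsJordanStarHom Φ) {x b z : A}
    (hx : IsSelfAdjoint x) (hb : IsSelfAdjoint b) (hz : IsSelfAdjoint z) :
    homDefect Φ x b * antiDefect Φ z b = 0 := by
  refine hΦ.homDefect_mul_antiDefect_eq_zero_of_mul (t := -(homDefect Φ z b * homDefect Φ z b))
    hx hb hz hb ?_
  have h := hΦ.homDefect_mul_map_mul_antiDefect_add_swap hb x z (z * b)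
  have h' := hΦ.homDefect_mul_map_mul_antiDefect_add_swap hb (b * x) z z
  rw [hΦ.homDefect_mul_left, hΦ.antiDefect_mul_left] at h'
  linear_combination (norm := noncomm_ring)
    homDefect Φ x b * antiDefect_apply Φ z b * antiDefect Φ z b +
      homDefect Φ z b * homDefect_apply Φ z b * antiDefect Φ x b + h - h'

theorem homDefect_mul_antiDefect_add_swap (hΦ : IsJordanStarHom Φ) (x b z d : A) :
    homDefect Φ x b * antiDefect Φ z d + homDefect Φ x d * antiDefect Φ z b = 0 := by
  refine apply_add_apply_swap_eq_zero_of_isSelfAdjoint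
    ((LinearMap.mul ℂ B).compl₁₂ (homDefect Φ x) (antiDefect Φ z)) (fun b hb => ?_) b d
  change homDefect Φ x b * antiDefect Φ z b = 0
  induction x using induction_isSelfAdjoint with
  | isSelfAdjoint x hx =>
    induction z using induction_isSelfAdjoint with
    | isSelfAdjoint z hz => exact hΦ.homDefect_mul_antiDefect_common_of_isSelfAdjoint hx hb hz
    | add_I_smul z y hz hy =>
      simp only [map_add, map_smul, LinearMap.add_apply, LinearMap.smul_apply, mul_add,
        mul_smul_comm, hz, hy, smul_zero, add_zero]
  | add_I_smul x y hx hy =>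
    simp only [map_add, map_smul, LinearMap.add_apply, LinearMap.smul_apply, add_mul,
      smul_mul_assoc, hx, hy, smul_zero, add_zero]

theorem homDefect_mul_antiDefect_common (hΦ : IsJordanStarHom Φ) (x z b : A) :
    homDefect Φ x b * antiDefect Φ z b = 0 := by
  rw [← nsmul_eq_zero_iff_right two_ne_zero, two_nsmul, hΦ.homDefect_mul_antiDefect_add_swap]

theorem homDefect_mul_map_mul_antiDefect_common (hΦ : IsJordanStarHom Φ) (x w z b : A) :
    homDefect Φ x b * Φ w * antiDefect Φ z b = 0 := by
  have cyclic (x w z) : homDefect Φ x b * Φ w * antiDefect Φ z b =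
      -(homDefect Φ w b * Φ z * antiDefect Φ x b) := by
    have h := hΦ.homDefect_mul_antiDefect_add_swap w b z (x * b - b * x)
    rw [← hΦ.comm_homDefect, ← hΦ.comm_antiDefect] at h
    linear_combination (norm := noncomm_ring) h +
      Φ w * hΦ.homDefect_mul_antiDefect_common x z b +
      hΦ.homDefect_mul_antiDefect_common w x b * Φ z
  rw [← nsmul_eq_zero_iff_right two_ne_zero]
  linear_combination (norm := noncomm_ring) cyclic x w z - cyclic w z x + cyclic z x w

theorem homDefect_mul_map_mul_antiDefect_exchange (hΦ : IsJordanStarHom Φ) (x b w z d : A) :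
    homDefect Φ x b * Φ w * antiDefect Φ z d = homDefect Φ z d * Φ w * antiDefect Φ x b := by
  have polar (x b z d) : homDefect Φ x b * Φ w * antiDefect Φ z d =
      -(homDefect Φ x d * Φ w * antiDefect Φ z b) := by
    have h := hΦ.homDefect_mul_map_mul_antiDefect_common x w z (b + d)
    simp only [map_add] at h
    linear_combination (norm := noncomm_ring) h -
      hΦ.homDefect_mul_map_mul_antiDefect_common x w z b -
      hΦ.homDefect_mul_map_mul_antiDefect_common x w z d
  rw [polar, hΦ.homDefect_swap x d, hΦ.antiDefect_swap z b, neg_mul, neg_mul_neg, polar,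
    neg_neg, hΦ.homDefect_swap d z, hΦ.antiDefect_swap b x, neg_mul, neg_mul_neg]

theorem homDefect_mul_antiDefect_of_isSelfAdjoint (hΦ : IsJordanStarHom Φ) {x b z d : A}
    (hx : IsSelfAdjoint x) (hb : IsSelfAdjoint b) (hz : IsSelfAdjoint z) (hd : IsSelfAdjoint d) :
    homDefect Φ x b * antiDefect Φ z d = 0 := by
  refine hΦ.homDefect_mul_antiDefect_eq_zero_of_mul (t := homDefect Φ z d * homDefect Φ z d)
    hx hb hz hd ?_
  have h := hΦ.homDefect_mul_map_mul_antiDefect_exchange x b (z * d) z d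
  have h' := hΦ.homDefect_mul_map_mul_antiDefect_exchange x b d z (z * d)
  rw [hΦ.antiDefect_swap z (z * d), hΦ.homDefect_swap z (z * d), hΦ.antiDefect_mul_left,
    hΦ.homDefect_mul_left, hΦ.antiDefect_swap d z, hΦ.homDefect_swap d z] at h'
  linear_combination (norm := noncomm_ring)
    homDefect Φ x b * antiDefect_apply Φ z d * antiDefect Φ z d -
      homDefect Φ z d * homDefect_apply Φ z d * antiDefect Φ x b + h - h'

theorem homDefect_mul_antiDefect (hΦ : IsJordanStarHom Φ) (x b z d : A) :
    homDefect Φ x b * antiDefect Φ z d = 0 := by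
  induction x using induction_isSelfAdjoint with
  | isSelfAdjoint x hx =>
    induction b using induction_isSelfAdjoint with
    | isSelfAdjoint b hb =>
      induction z using induction_isSelfAdjoint with
      | isSelfAdjoint z hz =>
        induction d using induction_isSelfAdjoint with
        | isSelfAdjoint d hd => exact hΦ.homDefect_mul_antiDefect_of_isSelfAdjoint hx hb hz hd
        | add_I_smul d y hd hy =>
          simp only [map_add, map_smul, mul_add, mul_smul_comm, hd, hy, smul_zero, add_zero]
      | add_I_smul z y hz hy =>
        simp only [map_add, map_smul, LinearMap.add_apply, LinearMap.smul_apply, mul_add,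
          mul_smul_comm, hz, hy, smul_zero, add_zero]
    | add_I_smul b y hb hy =>
      simp only [map_add, map_smul, add_mul, smul_mul_assoc, hb, hy, smul_zero, add_zero]
  | add_I_smul x y hx hy =>
    simp only [map_add, map_smul, LinearMap.add_apply, LinearMap.smul_apply, add_mul,
      smul_mul_assoc, hx, hy, smul_zero, add_zero]

end IsJordanStarHom
end JordanStarHom

section Kadison

open Finset Polynomial

theorem sum_smul_mul_sum_smul_le {ι B : Type*} [Ring B] [PartialOrder B] [StarRing B]
    [StarOrderedRing B] [Algebra ℝ B] [StarModule ℝ B] {s : Finset ι} {h : ι → B} (t : ι → ℝ)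
    (h_nonneg : ∀ i ∈ s, 0 ≤ h i) (h_sum : ∑ i ∈ s, h i = 1) :
    (∑ i ∈ s, t i • h i) * ∑ i ∈ s, t i • h i ≤ ∑ i ∈ s, t i ^ 2 • h i := by
  set T := ∑ i ∈ s, t i • h i with hT
  have hT_star : IsSelfAdjoint T :=
    isSelfAdjoint_sum _ fun i hi => (IsSelfAdjoint.all (t i)).smul (.of_nonneg (h_nonneg i hi))
  have variance : ∑ i ∈ s, (T - t i • 1) * h i * (T - t i • 1) =
      ∑ i ∈ s, t i ^ 2 • h i - T * T := by
    have expand (i : ι) : (T - t i • 1) * h i * (T - t i • 1) =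
        T * h i * T - T * (t i • h i) - t i • h i * T + t i ^ 2 • h i := by
      simp only [sub_mul, mul_sub, smul_mul_assoc, mul_smul_comm, one_mul, mul_one, smul_sub,
        pow_two, mul_smul]
      abel
    simp only [expand, sum_add_distrib, sum_sub_distrib, ← sum_mul, ← mul_sum, h_sum, ← hT]
    noncomm_ring
  rw [← sub_nonneg, ← variance]
  exact sum_nonneg fun i hi => IsSelfAdjoint.conjugate_nonneg (h_nonneg i hi)
    (hT_star.sub ((IsSelfAdjoint.all (t i)).smul (.one B)))

theorem sum_sq_smul_bernsteinPolynomial (R : Type*) [CommRing R] (n : ℕ) :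
    ∑ i ∈ range (n + 1), i ^ 2 • bernsteinPolynomial R n i = (n * (n - 1)) • X ^ 2 + n • X := by
  rw [← bernsteinPolynomial.sum_mul_smul, ← bernsteinPolynomial.sum_smul, ← sum_add_distrib]
  refine sum_congr rfl fun i _ => ?_
  rw [← add_smul]
  congr 1
  cases i <;> simp [pow_two, mul_add_one]

variable {A B : Type*} [CStarAlgebra A] [PartialOrder A] [StarOrderedRing A]
  [CStarAlgebra B] [PartialOrder B] [StarOrderedRing B]

theorem aeval_bernsteinPolynomial_nonneg_s8 {b : A} (hb₀ : 0 ≤ b) (hb₁ : b ≤ 1) (n i : ℕ) :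
    0 ≤ aeval b (bernsteinPolynomial ℤ n i) := by
  have h : aeval b (bernsteinPolynomial ℤ n i) = n.choose i • (b ^ i * (1 - b) ^ (n - i)) := by
    simp [bernsteinPolynomial, mul_assoc]
  rw [h]
  exact nsmul_nonneg (Commute.mul_nonneg (CStarAlgebra.pow_nonneg hb₀ i)
    (CStarAlgebra.pow_nonneg (sub_nonneg.2 hb₁) _)
    (((Commute.one_right b).sub_right (.refl b)).pow_pow _ _)) _

-- The images of the Bernstein polynomials of `b` are positive with sum `1`, so they play the role
-- of a spectral measure of `b` in `sum_smul_mul_sum_smul_le`; the error is their variance.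
theorem map_mul_map_le_map_mul_self_add (Φ : A →ₚ[ℂ] B) (hΦ : Φ 1 = 1) {b : A} (hb₀ : 0 ≤ b)
    (hb₁ : b ≤ 1) {n : ℕ} (hn : n ≠ 0) :
    Φ b * Φ b ≤ Φ (b * b) + (1 / n : ℝ) • Φ (b - b * b) := by
  have hn' : (n : ℝ) ≠ 0 := Nat.cast_ne_zero.2 hn
  let h (i : ℕ) : B := Φ (aeval b (bernsteinPolynomial ℤ n i))
  have moment₀ : ∑ i ∈ range (n + 1), h i = 1 := by
    rw [← map_sum, ← map_sum, bernsteinPolynomial.sum, map_one, hΦ]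
  have moment₁ : ∑ i ∈ range (n + 1), (i / n : ℝ) • h i = Φ b := by
    have smul_eq (i : ℕ) : (i / n : ℝ) • h i = (1 / n : ℝ) • i • h i := by
      rw [← Nat.cast_smul_eq_nsmul ℝ, smul_smul, one_div_mul_eq_div]
    simp only [smul_eq, ← smul_sum, h, ← map_nsmul, ← map_sum, bernsteinPolynomial.sum_smul]
    rw [map_nsmul, map_nsmul, aeval_X, ← Nat.cast_smul_eq_nsmul ℝ, smul_smul,
      one_div_mul_cancel hn', one_smul]
  have moment₂ : ∑ i ∈ range (n + 1), (i / n : ℝ) ^ 2 • h i =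
      Φ (b * b) + (1 / n : ℝ) • Φ (b - b * b) := by
    have smul_eq (i : ℕ) : (i / n : ℝ) ^ 2 • h i = (1 / n : ℝ) ^ 2 • i ^ 2 • h i := by
      rw [← Nat.cast_smul_eq_nsmul ℝ, smul_smul, Nat.cast_pow, ← mul_pow, one_div_mul_eq_div]
    simp only [smul_eq, ← smul_sum, h, ← map_nsmul, ← map_sum, sum_sq_smul_bernsteinPolynomial]
    simp only [map_add, map_sub, map_nsmul, map_pow, aeval_X, pow_two b]
    rw [← Nat.cast_smul_eq_nsmul ℝ, ← Nat.cast_smul_eq_nsmul ℝ, Nat.cast_mul,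
      Nat.cast_pred (Nat.pos_of_ne_zero hn)]
    match_scalars <;> field_simp
    ring
  rw [← moment₁, ← moment₂]
  exact sum_smul_mul_sum_smul_le _
    (fun i _ => map_nonneg Φ (aeval_bernsteinPolynomial_nonneg_s8 hb₀ hb₁ n i)) moment₀

theorem map_mul_map_le_map_mul_self_of_le_one (Φ : A →ₚ[ℂ] B) (hΦ : Φ 1 = 1) {b : A}
    (hb₀ : 0 ≤ b) (hb₁ : b ≤ 1) : Φ b * Φ b ≤ Φ (b * b) := by
  have lim : Tendsto (fun n : ℕ => Φ (b * b) + (1 / n : ℝ) • Φ (b - b * b)) atTop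
      (nhds (Φ (b * b))) := by
    simpa only [zero_smul, add_zero] using
      ((tendsto_one_div_atTop_nhds_zero_nat (𝕜 := ℝ)).smul_const (Φ (b - b * b))).const_add _
  refine ge_of_tendsto lim ?_
  filter_upwards [eventually_ne_atTop 0] with n hn
  exact map_mul_map_le_map_mul_self_add Φ hΦ hb₀ hb₁ hn

theorem exists_eq_smul_add_smul_one_of_isSelfAdjoint {b : A} (hb : IsSelfAdjoint b) :
    ∃ (c d : ℝ) (x : A), 0 ≤ x ∧ x ≤ 1 ∧ b = c • x + d • 1 := by
  have lower := hb.neg_algebraMap_norm_le_self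
  have upper := hb.le_algebraMap_norm_self
  rw [Algebra.algebraMap_eq_smul_one] at lower upper
  set r := ‖b‖
  have hr : 0 < 2 * r + 1 := by positivity
  refine ⟨2 * r + 1, -r, (2 * r + 1)⁻¹ • (b + r • 1), ?_, ?_, ?_⟩
  · exact smul_nonneg (inv_nonneg.2 hr.le) (neg_le_iff_add_nonneg.1 lower)
  · have h : b + r • 1 ≤ (2 * r + 1) • (1 : A) := calc
      b + r • 1 ≤ r • 1 + r • 1 + 1 :=
        (add_le_add_left upper _).trans (le_add_of_nonneg_right zero_le_one)
      _ = (2 * r + 1) • (1 : A) := by module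
    exact inv_smul_le_iff_of_pos hr |>.2 h
  · rw [smul_inv_smul₀ hr.ne']
    module

theorem map_mul_map_le_map_mul_self (Φ : A →ₚ[ℂ] B) (hΦ : Φ 1 = 1) {b : A}
    (hb : IsSelfAdjoint b) : Φ b * Φ b ≤ Φ (b * b) := by
  obtain ⟨c, d, x, hx₀, hx₁, rfl⟩ := exists_eq_smul_add_smul_one_of_isSelfAdjoint hb
  have h : 0 ≤ homDefect Φ.toLinearMap (c • x + d • 1) (c • x + d • 1) := by
    have affine := homDefect_smul_add_smul_one_self (Φ := Φ.toLinearMap) hΦ (c : ℂ) d x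
    norm_cast at affine
    rw [affine]
    exact smul_nonneg (sq_nonneg c)
      (sub_nonneg.2 (map_mul_map_le_map_mul_self_of_le_one Φ hΦ hx₀ hx₁))
  exact sub_nonneg.1 h

end Kadison

section QuadraticBound

variable {E V : Type*} [NormedAddCommGroup E] [InnerProductSpace ℂ E]
  [AddCommGroup V] [Module ℂ V]

theorem four_mul_inner_map_map (f e : V →ₗ[ℂ] E) (u v : V) :
    4 * ⟪f u, e v⟫_ℂ = ⟪f (u + v), e (u + v)⟫_ℂ - ⟪f (u - v), e (u - v)⟫_ℂ -
      Complex.I * ⟪f (u + Complex.I • v), e (u + Complex.I • v)⟫_ℂ +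
      Complex.I * ⟪f (u - Complex.I • v), e (u - Complex.I • v)⟫_ℂ := by
  simp only [map_add, map_sub, map_smul, inner_add_left, inner_add_right, inner_sub_left,
    inner_sub_right, inner_smul_left, inner_smul_right, Complex.conj_I]
  linear_combination (2 * ⟪f u, e v⟫_ℂ - 2 * ⟪f v, e u⟫_ℂ) * Complex.I_sq

theorem norm_inner_map_le_of_norm_inner_map_self_le {f e : V →ₗ[ℂ] E} {c : ℝ}
    (h : ∀ u, ‖⟪f u, e u⟫_ℂ‖ ≤ c * ‖e u‖ ^ 2) (u v : V) :
    ‖⟪f u, e v⟫_ℂ‖ ≤ c * (‖e u‖ ^ 2 + ‖e v‖ ^ 2) := by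
  have parallelogram := parallelogram_law_with_norm ℂ (e u) (e v)
  have parallelogram_I := parallelogram_law_with_norm ℂ (e u) (Complex.I • e v)
  have polarized : ‖4 * ⟪f u, e v⟫_ℂ‖ ≤ c * ‖e (u + v)‖ ^ 2 + c * ‖e (u - v)‖ ^ 2 +
      c * ‖e (u + Complex.I • v)‖ ^ 2 + c * ‖e (u - Complex.I • v)‖ ^ 2 := by
    have h_I (w : V) : ‖Complex.I * ⟪f w, e w⟫_ℂ‖ ≤ c * ‖e w‖ ^ 2 := by
      rw [norm_mul, Complex.norm_I, one_mul]
      exact h w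
    rw [four_mul_inner_map_map]
    exact norm_add_le_of_le (norm_sub_le_of_le (norm_sub_le_of_le (h _) (h _)) (h_I _)) (h_I _)
  rw [norm_smul, Complex.norm_I, one_mul] at parallelogram_I
  simp only [norm_mul, RCLike.norm_ofNat, map_add, map_sub, map_smul] at polarized
  linear_combination polarized / 4 + c / 4 * parallelogram + c / 4 * parallelogram_I

theorem norm_map_le_of_norm_inner_map_self_le {f e : V →ₗ[ℂ] E} (he : DenseRange e) {c : ℝ}
    (hc : 0 < c) (h : ∀ u, ‖⟪f u, e u⟫_ℂ‖ ≤ c * ‖e u‖ ^ 2) (u : V) :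
    ‖f u‖ ≤ 2 * c * ‖e u‖ := by
  have bound (w : E) : ‖⟪f u, w⟫_ℂ‖ ≤ c * (‖e u‖ ^ 2 + ‖w‖ ^ 2) :=
    he.induction_on (p := fun w => ‖⟪f u, w⟫_ℂ‖ ≤ c * (‖e u‖ ^ 2 + ‖w‖ ^ 2)) w
      (isClosed_le (by fun_prop) (by fun_prop)) (norm_inner_map_le_of_norm_inner_map_self_le h u)
  have optimal := bound ((2 * c)⁻¹ • f u)
  rw [inner_smul_right_eq_smul, norm_smul, norm_smul, Real.norm_of_nonneg (by positivity),
    ← inner_self_re_eq_norm, inner_self_eq_norm_sq] at optimal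
  refine le_of_sq_le_sq ?_ (by positivity)
  field_simp at optimal ⊢
  linarith

end QuadraticBound

section OrbitMap

instance isClosed_toStarSubalgebra (S : VonNeumannAlgebra H) :
    IsClosed (S.toStarSubalgebra : Set (H →L[ℂ] H)) := by
  rw [VonNeumannAlgebra.coe_toStarSubalgebra, ← VonNeumannAlgebra.centralizer_centralizer]
  exact Set.isClosed_centralizer _

instance starOrderedRing_starSubalgebra {A : Type*} [CStarAlgebra A] [PartialOrder A]
    [StarOrderedRing A] (S : StarSubalgebra ℂ A) [IsClosed (S : Set A)] : StarOrderedRing S := by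
  refine .of_nonneg_iff' (fun h z => add_le_add_right (α := A) h z) fun x => ⟨fun hx => ?_, ?_⟩
  · have sqrt_mem : CFC.sqrt (x : A) ∈ S := by
      rw [CFC.sqrt_eq_real_sqrt (x : A) hx]
      exact cfcₙ_mem (𝕜' := ℂ) Real.sqrt x.2
    refine ⟨⟨CFC.sqrt (x : A), sqrt_mem⟩, Subtype.ext ?_⟩
    change (x : A) = star (CFC.sqrt (x : A)) * CFC.sqrt (x : A)
    rw [(CFC.sqrt_nonneg (x : A)).isSelfAdjoint.star_eq, CFC.sqrt_mul_sqrt_self (x : A) hx]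
  · rintro ⟨s, rfl⟩
    exact star_mul_self_nonneg (s : A)

/-- The map `x ↦ x v` from a von Neumann algebra to the Hilbert space on which it acts. -/
def orbitMap (S : VonNeumannAlgebra H) (v : H) : S.toStarSubalgebra →ₗ[ℂ] H where
  toFun x := (x : H →L[ℂ] H) v
  map_add' _ _ := rfl
  map_smul' _ _ := rfl

theorem orbitMap_apply (S : VonNeumannAlgebra H) (v : H) (x : S.toStarSubalgebra) :
    orbitMap S v x = (x : H →L[ℂ] H) v := rfl

theorem inner_star_apply (T : H →L[ℂ] H) (u v : H) : ⟪star T u, v⟫_ℂ = ⟪u, T v⟫_ℂ :=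
  ContinuousLinearMap.adjoint_inner_left T v u

theorem inner_apply_star (T : H →L[ℂ] H) (u v : H) : ⟪u, star T v⟫_ℂ = ⟪T u, v⟫_ℂ :=
  ContinuousLinearMap.adjoint_inner_right T u v

theorem commutant_apply_comm {S : VonNeumannAlgebra H} {a x : H →L[ℂ] H} (ha : a ∈ S.commutant)
    (hx : x ∈ S) (v : H) : x (a v) = a (x v) :=
  congrArg (fun T : H →L[ℂ] H => T v) (VonNeumannAlgebra.mem_commutant_iff.1 ha x hx)

theorem IsCyclicVector.denseRange_orbitMap {S : VonNeumannAlgebra H} {v : H}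
    (h : IsCyclicVector S v) : DenseRange (orbitMap S v) := by
  refine h.mono (Submodule.span_le (p := LinearMap.range (orbitMap S v)).2 ?_)
  rintro _ ⟨x, hx, rfl⟩
  exact ⟨⟨x, hx⟩, rfl⟩

theorem starProjection_mem_of_commutant_invariant {S : VonNeumannAlgebra H} (K : Submodule ℂ H)
    [K.HasOrthogonalProjection] (h : ∀ a ∈ S.commutant, ∀ v ∈ K, a v ∈ K) :
    K.starProjection ∈ S := by
  rw [VonNeumannAlgebra.IsStarProjection.mem_iff (isStarProjection_starProjection (U := K)),
    Submodule.range_starProjection]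
  exact h

theorem IsSeparatingVector.denseRange_orbitMap_commutant {S : VonNeumannAlgebra H} {v : H}
    (h : IsSeparatingVector S v) : DenseRange (orbitMap S.commutant v) := by
  let K := (LinearMap.range (orbitMap S.commutant v)).topologicalClosure
  have : CompleteSpace K := (Submodule.isClosed_topologicalClosure _).completeSpace_coe
  have invariant (a) (ha : a ∈ S.commutant) (w) (hw : w ∈ K) : a w ∈ K := by
    refine map_mem_closure a.continuous hw ?_
    rintro _ ⟨b, rfl⟩
    exact ⟨⟨a, ha⟩ * b, rfl⟩
  have hv : v ∈ K := Submodule.le_topologicalClosure _ ⟨1, rfl⟩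
  have projection_eq_one : 1 - K.starProjection = 0 :=
    h _ (sub_mem (one_mem S) (starProjection_mem_of_commutant_invariant K invariant)) <| by
      rw [sub_apply, one_apply_eq_self, Submodule.starProjection_eq_self_iff.2 hv, sub_self]
  intro w
  change w ∈ K
  rw [← Submodule.starProjection_eq_self_iff, ← sub_eq_zero.1 projection_eq_one,
    one_apply_eq_self]

end OrbitMap

section OrbitTransport

open scoped ComplexOrder

variable {M N : VonNeumannAlgebra H} {ξ : H}

theorem IsSeparatingVector.eq_of_apply_eq (hsep : IsSeparatingVector M ξ) {x y : H →L[ℂ] H}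
    (hx : x ∈ M) (hy : y ∈ M) (h : x ξ = y ξ) : x = y :=
  sub_eq_zero.1 (hsep _ (sub_mem hx hy) (by rw [sub_apply, h, sub_self]))

theorem IsSeparatingVector.eq_zero_of_inner_apply_eq_zero (hsep : IsSeparatingVector M ξ)
    {T : H →L[ℂ] H} (hT : T ∈ M) (hT₀ : 0 ≤ T) (h : ⟪T ξ, ξ⟫_ℂ = 0) : T = 0 := by
  refine hsep T hT ?_
  obtain ⟨s, rfl⟩ := CStarAlgebra.nonneg_iff_eq_star_mul_self.1 hT₀
  rw [mul_apply_eq_comp, inner_star_apply, inner_self_eq_zero] at h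
  rw [mul_apply_eq_comp, h, map_zero]

theorem inner_nonneg_of_mem_sharpCone {ζ : H} (hζ : ζ ∈ sharpCone M ξ) {a : H →L[ℂ] H}
    (ha : a ∈ M.commutant) : 0 ≤ ⟪a ζ, a ξ⟫_ℂ := by
  have closed : IsClosed {ζ : H | 0 ≤ ⟪a ζ, a ξ⟫_ℂ} := isClosed_le continuous_const (by fun_prop)
  refine closure_minimal ?_ closed hζ
  rintro _ ⟨b, hb, hb_pos, rfl⟩
  rw [Set.mem_ofPred_eq, ← commutant_apply_comm ha hb]
  exact hb_pos.inner_nonneg_left _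

theorem inner_apply_nonneg_of_sharpCone_subset (hsub : sharpCone N ξ ⊆ sharpCone M ξ)
    {b : N.toStarSubalgebra} (hb : 0 ≤ b) {a : H →L[ℂ] H} (ha : a ∈ M.commutant) :
    0 ≤ ⟪a ((b : H →L[ℂ] H) ξ), a ξ⟫_ℂ :=
  inner_nonneg_of_mem_sharpCone (hsub (subset_closure
    ⟨b, b.2, (ContinuousLinearMap.nonneg_iff_isPositive _).1 hb, rfl⟩)) ha

theorem norm_inner_apply_le_of_sharpCone_subset (hsub : sharpCone N ξ ⊆ sharpCone M ξ)
    {b : N.toStarSubalgebra} (hb : 0 ≤ b) {a : H →L[ℂ] H} (ha : a ∈ M.commutant) :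
    ‖⟪a ((b : H →L[ℂ] H) ξ), a ξ⟫_ℂ‖ ≤ ‖b‖ * ‖a ξ‖ ^ 2 := by
  have lower := inner_apply_nonneg_of_sharpCone_subset hsub hb ha
  have upper := inner_apply_nonneg_of_sharpCone_subset hsub
    (sub_nonneg.2 (IsSelfAdjoint.of_nonneg hb).le_algebraMap_norm_self) ha
  have h : ⟪a ((b : H →L[ℂ] H) ξ), a ξ⟫_ℂ ≤ ((‖b‖ * ‖a ξ‖ ^ 2 : ℝ) : ℂ) := by
    rw [Algebra.algebraMap_eq_smul_one, AddSubgroupClass.coe_sub, sub_apply, map_sub,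
      inner_sub_left, sub_nonneg] at upper
    have scalar : ((‖b‖ • (1 : N.toStarSubalgebra) : N.toStarSubalgebra) : H →L[ℂ] H) ξ =
        (‖b‖ : ℂ) • ξ := rfl
    rw [scalar, map_smul, inner_smul_left, inner_self_eq_norm_sq_to_K, Complex.conj_ofReal]
      at upper
    rw [Complex.ofReal_mul, Complex.ofReal_pow]
    exact upper
  simpa using CStarAlgebra.norm_le_norm_of_nonneg_of_le lower h

theorem exists_norm_apply_le_of_sharpCone_subset (hsep : IsSeparatingVector M ξ)
    (hsub : sharpCone N ξ ⊆ sharpCone M ξ) (x : N.toStarSubalgebra) :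
    ∃ C, ∀ a, ‖orbitMap M.commutant ((x : H →L[ℂ] H) ξ) a‖ ≤ C * ‖orbitMap M.commutant ξ a‖ := by
  induction CStarAlgebra.span_nonneg (A := N.toStarSubalgebra) ▸ Submodule.mem_top (x := x)
    using Submodule.span_induction with
  | mem b hb =>
    refine ⟨_, norm_map_le_of_norm_inner_map_self_le hsep.denseRange_orbitMap_commutant
      (c := ‖b‖ + 1) (by positivity) fun a => ?_⟩
    exact (norm_inner_apply_le_of_sharpCone_subset hsub hb a.2).trans
      (mul_le_mul_of_nonneg_right (le_add_of_nonneg_right zero_le_one) (sq_nonneg _))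
  | zero => exact ⟨0, fun a => by simp [orbitMap_apply]⟩
  | add x y _ _ hx hy =>
    obtain ⟨C, hC⟩ := hx
    obtain ⟨D, hD⟩ := hy
    refine ⟨C + D, fun a => ?_⟩
    rw [add_mul, orbitMap_apply, AddMemClass.coe_add, add_apply, map_add]
    exact norm_add_le_of_le (hC a) (hD a)
  | smul c x _ hx =>
    obtain ⟨C, hC⟩ := hx
    refine ⟨‖c‖ * C, fun a => ?_⟩
    rw [mul_assoc, orbitMap_apply, SetLike.val_smul, smul_apply, map_smul, norm_smul]
    exact mul_le_mul_of_nonneg_left (hC a) (norm_nonneg c)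

theorem exists_mem_apply_eq_of_sharpCone_subset (hsep : IsSeparatingVector M ξ)
    (hsub : sharpCone N ξ ⊆ sharpCone M ξ) (x : N.toStarSubalgebra) :
    ∃ y ∈ M, y ξ = (x : H →L[ℂ] H) ξ := by
  have dense := hsep.denseRange_orbitMap_commutant
  let y := (orbitMap M.commutant ((x : H →L[ℂ] H) ξ)).extendOfNorm (orbitMap M.commutant ξ)
  have hy (a : M.commutant.toStarSubalgebra) :
      y (orbitMap M.commutant ξ a) = orbitMap M.commutant ((x : H →L[ℂ] H) ξ) a :=
    LinearMap.extendOfNorm_eq dense (exists_norm_apply_le_of_sharpCone_subset hsep hsub x) a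
  refine ⟨y, ?_, hy 1⟩
  rw [← VonNeumannAlgebra.commutant_commutant M, VonNeumannAlgebra.mem_commutant_iff]
  intro a ha
  ext v
  refine dense.induction_on (p := fun v => a (y v) = y (a v)) v
    (isClosed_eq (by fun_prop) (by fun_prop)) fun c => ?_
  rw [hy]
  exact (hy (⟨a, ha⟩ * c)).symm

/-- `Φ` transports the orbit of `ξ` under `N` into `M`: it sends `x ∈ N` to an element of `M`
with the same value at `ξ`. -/
structure IsOrbitTransport (M : VonNeumannAlgebra H) (ξ : H)
    (Φ : N.toStarSubalgebra →ₗ[ℂ] (H →L[ℂ] H)) : Prop where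
  map_mem : ∀ x, Φ x ∈ M
  map_apply : ∀ x, Φ x ξ = (x : H →L[ℂ] H) ξ

theorem exists_isOrbitTransport (hsep : IsSeparatingVector M ξ)
    (hsub : sharpCone N ξ ⊆ sharpCone M ξ) :
    ∃ Φ : N.toStarSubalgebra →ₗ[ℂ] (H →L[ℂ] H), IsOrbitTransport M ξ Φ := by
  choose Φ mem apply_eq using exists_mem_apply_eq_of_sharpCone_subset hsep hsub
  refine ⟨⟨⟨Φ, fun x y => ?_⟩, fun c x => ?_⟩, mem, apply_eq⟩
  · refine hsep.eq_of_apply_eq (mem _) (add_mem (mem x) (mem y)) ?_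
    simp only [add_apply, apply_eq, AddMemClass.coe_add]
  · refine hsep.eq_of_apply_eq (mem _) (M.toStarSubalgebra.smul_mem (mem x) c) ?_
    simp only [RingHom.id_apply, smul_apply, apply_eq, SetLike.val_smul]

namespace IsOrbitTransport

variable {Φ : N.toStarSubalgebra →ₗ[ℂ] (H →L[ℂ] H)}

theorem map_one (hΦ : IsOrbitTransport M ξ Φ) (hsep : IsSeparatingVector M ξ) : Φ 1 = 1 :=
  hsep.eq_of_apply_eq (hΦ.map_mem 1) (one_mem M) (hΦ.map_apply 1)

theorem map_nonneg (hΦ : IsOrbitTransport M ξ Φ) (hsep : IsSeparatingVector M ξ)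
    (hsub : sharpCone N ξ ⊆ sharpCone M ξ) {b : N.toStarSubalgebra} (hb : 0 ≤ b) : 0 ≤ Φ b := by
  rw [ContinuousLinearMap.nonneg_iff_isPositive, ContinuousLinearMap.isPositive_iff_complex]
  intro v
  have h : 0 ≤ ⟪Φ b v, v⟫_ℂ :=
    hsep.denseRange_orbitMap_commutant.induction_on (p := fun v => 0 ≤ ⟪Φ b v, v⟫_ℂ) v
      (isClosed_le continuous_const (by fun_prop)) fun a => by
        rw [orbitMap_apply, commutant_apply_comm a.2 (hΦ.map_mem b), hΦ.map_apply]
        exact inner_apply_nonneg_of_sharpCone_subset hsub hb a.2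
  obtain ⟨-, im_eq⟩ := Complex.le_def.1 h
  exact ⟨Complex.ext rfl im_eq, (Complex.le_def.1 h).1⟩

theorem inner_homDefect_self (hΦ : IsOrbitTransport M ξ Φ) {b : N.toStarSubalgebra}
    (hb : IsSelfAdjoint b) (hΦb : IsSelfAdjoint (Φ b)) : ⟪homDefect Φ b b ξ, ξ⟫_ℂ = 0 := by
  have hb' : IsSelfAdjoint (b : H →L[ℂ] H) := hb.map N.toStarSubalgebra.subtype
  have inner_mul_self {T : H →L[ℂ] H} (hT : IsSelfAdjoint T) : ⟪(T * T) ξ, ξ⟫_ℂ = ⟪T ξ, T ξ⟫_ℂ :=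
    hT.isSymmetric _ _
  rw [homDefect_apply, sub_apply, hΦ.map_apply, inner_sub_left, MulMemClass.coe_mul,
    inner_mul_self hΦb, inner_mul_self hb', hΦ.map_apply, sub_self]

theorem isJordanStarHom (hΦ : IsOrbitTransport M ξ Φ) (hsep : IsSeparatingVector M ξ)
    (hsub : sharpCone N ξ ⊆ sharpCone M ξ) : IsJordanStarHom Φ := by
  let Ψ : N.toStarSubalgebra →ₚ[ℂ] (H →L[ℂ] H) :=
    .mk₀ Φ fun _ hb => hΦ.map_nonneg hsep hsub hb
  have map_star (x) : Φ (star x) = star (Φ x) := map_star Ψ x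
  have homDefect_self (b) (hb : IsSelfAdjoint b) : homDefect Φ b b = 0 :=
    hsep.eq_zero_of_inner_apply_eq_zero
      (sub_mem (hΦ.map_mem _) (mul_mem (hΦ.map_mem b) (hΦ.map_mem b)))
      (sub_nonneg.2 (map_mul_map_le_map_mul_self Ψ (hΦ.map_one hsep) hb))
      (hΦ.inner_homDefect_self hb (hb.map' Ψ))
  refine ⟨⟨hΦ.map_one hsep, fun x y => ?_⟩, map_star⟩
  have h := apply_add_apply_swap_eq_zero_of_isSelfAdjoint (homDefect Φ) homDefect_self x y
  rw [homDefect_apply, homDefect_apply] at h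
  linear_combination (norm := noncomm_ring) h

end IsOrbitTransport
end OrbitTransport

section DefectKernel

variable {A : Type*} [Ring A] [Algebra ℂ A]

/-- The common kernel of the multiplicative defects of `Φ`: the largest subspace on which `Φ`
is multiplicative. -/
def defectKernel (Φ : A →ₗ[ℂ] (H →L[ℂ] H)) : Submodule ℂ H where
  carrier := {v | ∀ x y, homDefect Φ x y v = 0}
  add_mem' hu hv x y := by rw [map_add, hu, hv, add_zero]
  zero_mem' _ _ := map_zero _
  smul_mem' c v hv x y := by rw [map_smul, hv, smul_zero]

instance completeSpace_defectKernel (Φ : A →ₗ[ℂ] (H →L[ℂ] H)) : CompleteSpace (defectKernel Φ) := by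
  have closed : IsClosed {v | ∀ x y, homDefect Φ x y v = 0} := by
    simp only [Set.ofPred_forall]
    exact isClosed_iInter fun x => isClosed_iInter fun y =>
      isClosed_eq (by fun_prop) continuous_const
  exact IsClosed.completeSpace_coe (s := (defectKernel Φ : Set H)) (hs := closed)

namespace IsJordanStarHom

variable [StarRing A] {Φ : A →ₗ[ℂ] (H →L[ℂ] H)}

theorem starProjection_defectKernel_mul_homDefect (hΦ : IsJordanStarHom Φ) (x y : A) :
    (defectKernel Φ).starProjection * homDefect Φ x y = 0 := by
  have h : homDefect Φ (star y) (star x) * (defectKernel Φ).starProjection = 0 :=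
    ContinuousLinearMap.ext fun v =>
      Submodule.starProjection_apply_mem (defectKernel Φ) v (star y) (star x)
  have h' := congrArg star h
  rwa [star_mul, hΦ.star_homDefect, star_star, star_star, star_zero,
    isStarProjection_starProjection.isSelfAdjoint.star_eq] at h'

theorem starProjection_defectKernel_mul_antiDefect [StarModule ℂ A] (hΦ : IsJordanStarHom Φ)
    (x y : A) : (defectKernel Φ).starProjection * antiDefect Φ x y = antiDefect Φ x y := by
  ext v
  exact Submodule.starProjection_eq_self_iff.2 fun z b =>
    congrArg (fun T : H →L[ℂ] H => T v) (hΦ.homDefect_mul_antiDefect z b x y)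

theorem starProjection_defectKernel_comm (hΦ : IsJordanStarHom Φ) (x : A) :
    (defectKernel Φ).starProjection * Φ x = Φ x * (defectKernel Φ).starProjection := by
  have hp := (isStarProjection_starProjection (U := defectKernel Φ)).isSelfAdjoint.star_eq
  have invariant (y) : (defectKernel Φ).starProjection * (Φ y * (defectKernel Φ).starProjection) =
      Φ y * (defectKernel Φ).starProjection := by
    ext v
    refine Submodule.starProjection_eq_self_iff.2 fun a b => ?_
    have hv : ∀ a b, homDefect Φ a b ((defectKernel Φ).starProjection v) = 0 :=
      Submodule.starProjection_apply_mem (defectKernel Φ) v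
    have h := congrArg (fun T : H →L[ℂ] H => T ((defectKernel Φ).starProjection v))
      (hΦ.comm_homDefect y a b)
    change homDefect Φ a b (Φ y ((defectKernel Φ).starProjection v)) = 0
    simpa only [sub_apply, mul_apply_eq_comp, hv, map_zero, sub_zero] using h
  have invariant_star := congrArg star (invariant (star x))
  rw [star_mul, star_mul, hΦ.map_star, star_star, hp, mul_assoc, invariant] at invariant_star
  exact invariant_star.symm

end IsJordanStarHom
end DefectKernel

section TracialVector

variable {N : VonNeumannAlgebra H}

/-- `v` is a tracial vector for `N`: the functional `x ↦ ⟪x v, v⟫` is a trace on `N`. -/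
def IsTracialVector (N : VonNeumannAlgebra H) (v : H) : Prop :=
  ∀ x ∈ N, ∀ y ∈ N, ⟪(x * y) v, v⟫_ℂ = ⟪(y * x) v, v⟫_ℂ

theorem inner_apply_projection_self {x q : H →L[ℂ] H} (hq : IsStarProjection q)
    (hqN : q ∈ N.commutant) (hx : x ∈ N) (v : H) : ⟪x (q v), q v⟫_ℂ = ⟪q (x v), v⟫_ℂ := by
  rw [commutant_apply_comm hqN hx, ← inner_star_apply, hq.isSelfAdjoint.star_eq,
    ← mul_apply_eq_comp, hq.isIdempotentElem]

theorem IsTracialVector.norm_star_apply_le {v : H} (hv : IsTracialVector N v) {x y : H →L[ℂ] H}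
    (hx : x ∈ N) (hy : y ∈ N) : ‖star x (y v)‖ ≤ ‖y‖ * ‖x v‖ := by
  have norm_eq : ‖star x (y v)‖ = ‖star y (x v)‖ := by
    have h := hv (star y * x) (mul_mem (star_mem hy) hx) (star x * y) (mul_mem (star_mem hx) hy)
    simp only [mul_apply_eq_comp, inner_star_apply] at h
    rw [← inner_apply_star x, ← inner_apply_star y, inner_self_eq_norm_sq_to_K,
      inner_self_eq_norm_sq_to_K] at h
    exact (sq_eq_sq₀ (norm_nonneg _) (norm_nonneg _)).1 (by exact_mod_cast h)
  rw [norm_eq, ← norm_star y]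
  exact (star y).le_opNorm _

theorem IsTracialVector.norm_inner_apply_le {v : H} (hv : IsTracialVector N v)
    {w x y : H →L[ℂ] H} (hw : w ∈ N.commutant) (hx : x ∈ N) (hy : y ∈ N) (u : H) :
    ‖⟪x u, w (y v)⟫_ℂ‖ ≤ ‖star w u‖ * (‖y‖ * ‖x v‖) := by
  have h : ⟪x u, w (y v)⟫_ℂ = ⟪star w u, star x (y v)⟫_ℂ := by
    rw [← inner_star_apply, ← commutant_apply_comm (star_mem hw) hx, inner_apply_star]
  rw [h]
  exact (norm_inner_le_norm _ _).trans
    (mul_le_mul_of_nonneg_left (hv.norm_star_apply_le hx hy) (norm_nonneg _))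

theorem IsTracialVector.mem_of_isStarProjection {ξ : H} {q : H →L[ℂ] H}
    (hv : IsTracialVector N (q ξ)) (hcyc : IsCyclicVector N ξ) (hq : IsStarProjection q)
    (hqN : q ∈ N.commutant) : q ∈ N := by
  have dense := hcyc.denseRange_orbitMap
  have orthogonal_orbit (w) (hw : w ∈ N.commutant) (y : N.toStarSubalgebra) (u) (hu : q u = 0) :
      ⟪u, w (q (orbitMap N ξ y))⟫_ℂ = 0 := by
    have bound : ‖⟪u, w (q (orbitMap N ξ y))⟫_ℂ‖ ≤ ‖star w ξ‖ * (‖y‖ * ‖q u‖) :=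
      dense.induction_on
        (p := fun u => ‖⟪u, w (q (orbitMap N ξ y))⟫_ℂ‖ ≤ ‖star w ξ‖ * (‖y‖ * ‖q u‖)) u
        (isClosed_le (by fun_prop) (by fun_prop)) fun x => by
          rw [orbitMap_apply, orbitMap_apply, ← commutant_apply_comm hqN x.2,
            ← commutant_apply_comm hqN y.2]
          exact hv.norm_inner_apply_le hw x.2 y.2 ξ
    rwa [hu, norm_zero, mul_zero, mul_zero, norm_le_zero_iff] at bound
  have orthogonal (w) (hw : w ∈ N.commutant) (u) (hu : q u = 0) (v) : ⟪u, w (q v)⟫_ℂ = 0 :=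
    dense.induction_on (p := fun v => ⟪u, w (q v)⟫_ℂ = 0) v
      (isClosed_eq (by fun_prop) continuous_const) (orthogonal_orbit w hw · u hu)
  rw [VonNeumannAlgebra.IsStarProjection.mem_iff hq]
  rintro w hw _ ⟨v, rfl⟩
  refine ⟨w (q v), (sub_eq_zero.1 (inner_self_eq_zero (𝕜 := ℂ).1 ?_)).symm⟩
  have h : q (w (q v) - q (w (q v))) = 0 := by
    rw [map_sub, ← mul_apply_eq_comp q q, hq.isIdempotentElem, sub_self]
  change ⟪w (q v) - q (w (q v)), w (q v) - q (w (q v))⟫_ℂ = 0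
  rw [inner_sub_right, orthogonal w hw _ h, ← inner_star_apply, hq.isSelfAdjoint.star_eq, h,
    inner_zero_left, sub_zero]

end TracialVector

section CentralProjection

theorem IsCyclicVector.ext {N : VonNeumannAlgebra H} {ξ : H} (hcyc : IsCyclicVector N ξ)
    {S T : H →L[ℂ] H} (h : ∀ y ∈ N, S (y ξ) = T (y ξ)) : S = T :=
  DFunLike.coe_injective <| hcyc.denseRange_orbitMap.equalizer S.continuous T.continuous <|
    funext fun y => h y y.2

namespace IsOrbitTransport

variable {M N : VonNeumannAlgebra H} {ξ : H} {Φ : N.toStarSubalgebra →ₗ[ℂ] (H →L[ℂ] H)}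

theorem homDefect_apply_vector (hΦ : IsOrbitTransport M ξ Φ) (x y : N.toStarSubalgebra) :
    homDefect Φ x y ξ =
      (x : H →L[ℂ] H) ((y : H →L[ℂ] H) ξ) - Φ x ((y : H →L[ℂ] H) ξ) := by
  rw [homDefect_apply, sub_apply, mul_apply_eq_comp, hΦ.map_apply, hΦ.map_apply]
  rfl

theorem antiDefect_apply_vector (hΦ : IsOrbitTransport M ξ Φ) (x y : N.toStarSubalgebra) :
    antiDefect Φ x y ξ =
      (x : H →L[ℂ] H) ((y : H →L[ℂ] H) ξ) - Φ y ((x : H →L[ℂ] H) ξ) := by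
  rw [antiDefect_apply, sub_apply, mul_apply_eq_comp, hΦ.map_apply, hΦ.map_apply]
  rfl

theorem inner_map_apply (hΦ : IsOrbitTransport M ξ Φ) (hJ : IsJordanStarHom Φ)
    (x : N.toStarSubalgebra) (v : H) : ⟪Φ x v, ξ⟫_ℂ = ⟪(x : H →L[ℂ] H) v, ξ⟫_ℂ := by
  rw [← inner_apply_star, ← inner_apply_star, ← hJ.map_star, hΦ.map_apply, StarMemClass.coe_star]

theorem isSeparatingVector (hΦ : IsOrbitTransport M ξ Φ) (hJ : IsJordanStarHom Φ)
    (hsep : IsSeparatingVector M ξ) (hcyc : IsCyclicVector N ξ) : IsSeparatingVector N ξ := by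
  have star_apply_eq_zero (y : H →L[ℂ] H) (hy : y ∈ N) (hyξ : y ξ = 0) : star y ξ = 0 := by
    have map_eq_zero : Φ ⟨y, hy⟩ = 0 := hsep _ (hΦ.map_mem _) ((hΦ.map_apply _).trans hyξ)
    have h := hΦ.map_apply (star ⟨y, hy⟩)
    rw [hJ.map_star, map_eq_zero, star_zero, zero_apply] at h
    exact h.symm
  intro x hx hxξ
  rw [← star_eq_zero]
  refine hcyc.ext fun y hy => ?_
  have h := star_apply_eq_zero (star y * x) (mul_mem (star_mem hy) hx)
    (by rw [mul_apply_eq_comp, hxξ, map_zero])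
  rwa [star_mul, star_star] at h

theorem starProjection_defectKernel_mem (hΦ : IsOrbitTransport M ξ Φ) :
    (defectKernel Φ).starProjection ∈ M := by
  refine starProjection_mem_of_commutant_invariant _ fun a ha v hv x y => ?_
  have h : homDefect Φ x y ∈ M :=
    sub_mem (hΦ.map_mem _) (mul_mem (hΦ.map_mem _) (hΦ.map_mem _))
  rw [commutant_apply_comm ha h, hv x y, map_zero]

theorem starProjection_defectKernel_mul (hΦ : IsOrbitTransport M ξ Φ) (hJ : IsJordanStarHom Φ)
    (hcyc : IsCyclicVector N ξ) (x : N.toStarSubalgebra) :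
    (defectKernel Φ).starProjection * (x : H →L[ℂ] H) =
      (defectKernel Φ).starProjection * Φ x := by
  refine hcyc.ext fun y hy => sub_eq_zero.1 ?_
  have h := congrArg (fun T : H →L[ℂ] H => T ξ)
    (hJ.starProjection_defectKernel_mul_homDefect x ⟨y, hy⟩)
  simpa only [mul_apply_eq_comp, hΦ.homDefect_apply_vector, map_sub,
    zero_apply] using h

theorem mul_starProjection_defectKernel (hΦ : IsOrbitTransport M ξ Φ) (hJ : IsJordanStarHom Φ)
    (hcyc : IsCyclicVector N ξ) (x : N.toStarSubalgebra) :
    (x : H →L[ℂ] H) * (defectKernel Φ).starProjection =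
      Φ x * (defectKernel Φ).starProjection := by
  have h := congrArg star (hΦ.starProjection_defectKernel_mul hJ hcyc (star x))
  rwa [star_mul, star_mul, hJ.map_star, StarMemClass.coe_star, star_star, star_star,
    isStarProjection_starProjection.isSelfAdjoint.star_eq] at h

theorem starProjection_defectKernel_mem_commutant (hΦ : IsOrbitTransport M ξ Φ)
    (hJ : IsJordanStarHom Φ) (hcyc : IsCyclicVector N ξ) :
    (defectKernel Φ).starProjection ∈ N.commutant := by
  refine VonNeumannAlgebra.mem_commutant_iff.2 fun x hx => ?_
  rw [hΦ.starProjection_defectKernel_mul hJ hcyc ⟨x, hx⟩, hJ.starProjection_defectKernel_comm]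
  exact hΦ.mul_starProjection_defectKernel hJ hcyc ⟨x, hx⟩

theorem one_sub_starProjection_defectKernel_mul_apply (hΦ : IsOrbitTransport M ξ Φ)
    (hJ : IsJordanStarHom Φ) (x y : N.toStarSubalgebra) :
    (1 - (defectKernel Φ).starProjection) ((x : H →L[ℂ] H) ((y : H →L[ℂ] H) ξ)) =
      Φ y ((1 - (defectKernel Φ).starProjection) ((x : H →L[ℂ] H) ξ)) := by
  have comm := congrArg (fun T : H →L[ℂ] H => T ((x : H →L[ℂ] H) ξ))
    (hJ.starProjection_defectKernel_comm y)
  have h := congrArg (fun T : H →L[ℂ] H => T ξ) (hJ.starProjection_defectKernel_mul_antiDefect x y)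
  simp only [mul_apply_eq_comp, hΦ.antiDefect_apply_vector, map_sub] at comm h
  simp only [sub_apply, one_apply_eq_self, map_sub]
  linear_combination (norm := abel) -comm - h

theorem isTracialVector_one_sub_starProjection_defectKernel (hΦ : IsOrbitTransport M ξ Φ)
    (hJ : IsJordanStarHom Φ) (hcyc : IsCyclicVector N ξ) :
    IsTracialVector N ((1 - (defectKernel Φ).starProjection) ξ) := by
  have hq := (isStarProjection_starProjection (U := defectKernel Φ)).one_sub
  have hqN : 1 - (defectKernel Φ).starProjection ∈ N.commutant :=
    sub_mem (one_mem _) (hΦ.starProjection_defectKernel_mem_commutant hJ hcyc)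
  intro x hx y hy
  rw [inner_apply_projection_self hq hqN (mul_mem hx hy),
    inner_apply_projection_self hq hqN (mul_mem hy hx), mul_apply_eq_comp, mul_apply_eq_comp,
    hΦ.one_sub_starProjection_defectKernel_mul_apply hJ ⟨x, hx⟩ ⟨y, hy⟩, hΦ.inner_map_apply hJ,
    ← commutant_apply_comm hqN hy]

end IsOrbitTransport
end CentralProjection

/-- If `ξ₀` is cyclic for `N` and the cone of `N` is contained in `P♯`, then
`ξ₀` separates `N`, there is a central projection `e` of `N` with `N e ⊆ M`, and
`(1 - e) ξ₀` is tracial for `N (1 - e)`. -/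
theorem stmt8 (M N : VonNeumannAlgebra H) (ξ₀ : H)
    (hcyc : IsCyclicVector M ξ₀) (hsep : IsSeparatingVector M ξ₀)
    (hcycN : IsCyclicVector N ξ₀)
    (hsub : closure {ζ : H | ∃ b : H →L[ℂ] H, b ∈ N ∧ b.IsPositive ∧ b ξ₀ = ζ} ⊆
      sharpCone M ξ₀) :
    IsSeparatingVector N ξ₀ ∧
    ∃ e : H →L[ℂ] H, e ∈ N ∧ IsSelfAdjoint e ∧ e * e = e ∧
      (∀ x ∈ N, e * x = x * e) ∧
      (∀ x ∈ N, x * e ∈ M) ∧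
      (∀ x ∈ N, ∀ y ∈ N,
        ⟪(x * y) ((1 - e) ξ₀), (1 - e) ξ₀⟫_ℂ = ⟪(y * x) ((1 - e) ξ₀), (1 - e) ξ₀⟫_ℂ) := by
  obtain ⟨Φ, hΦ⟩ := exists_isOrbitTransport hsep hsub
  have hJ := hΦ.isJordanStarHom hsep hsub
  have hp := isStarProjection_starProjection (U := defectKernel Φ)
  have hpN := hΦ.starProjection_defectKernel_mem_commutant hJ hcycN
  have tracial := hΦ.isTracialVector_one_sub_starProjection_defectKernel hJ hcycN
  have one_sub_mem : 1 - (defectKernel Φ).starProjection ∈ N :=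
    tracial.mem_of_isStarProjection hcycN hp.one_sub (sub_mem (one_mem _) hpN)
  refine ⟨hΦ.isSeparatingVector hJ hsep hcycN, (defectKernel Φ).starProjection,
    by simpa only [sub_sub_cancel] using sub_mem (one_mem N) one_sub_mem, hp.isSelfAdjoint,
    hp.isIdempotentElem, fun x hx => (VonNeumannAlgebra.mem_commutant_iff.1 hpN x hx).symm,
    fun x hx => ?_, tracial⟩
  rw [hΦ.mul_starProjection_defectKernel hJ hcycN ⟨x, hx⟩]
  exact mul_mem (hΦ.map_mem _) hΦ.starProjection_defectKernel_mem
end
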